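/- arXiv:2312.05478 — 2 statements merged into one kernel-verified Lean document; each statement's English description precedes it below -/
import Mathlib

section
/- Let λ be a partition of r with conjugate μ = λ' = (μ_1,…,μ_ℓ), and let k_1,…,k_{ℓ−1} be positive integers with k_c ≤ μ_{c+1} for all c. If μ_c > μ_{c+1} for every c such that k_c = μ_{c+1} > 1, then M^λ / GR^λ(k_1,…,k_{ℓ−1}) ≅ S^λ as 𝔖_r-modules; equivalently, GR^λ(k_1,…,k_{ℓ−1}) = G^λ as subspaces of M^λ. -/
set_option synthInstance.maxHeartbeats 1000000
set_option maxSynthPendingDepth 3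
set_option maxHeartbeats 1000000

noncomputable section

namespace Specht

variable (K : Type) [Field K] [CharZero K]
variable {L : ℕ} (μ : Fin L → ℕ) (r : ℕ)

/-- The cells of the Young diagram of `λ`, where `μ = λ'` records the column lengths:
`⟨c, j⟩` is the cell in column `c` and row `j` (`0`-indexed). -/
abbrev Cell : Type := Σ c : Fin L, Fin (μ c)

/-- Young tableaux of shape `λ`: bijective fillings of the diagram of `λ` by `{1, …, r}`. -/
abbrev Tab : Type := Cell μ ≃ Fin r

/-- The free vector space on the set of Young tableaux of shape `λ`. -/
abbrev FreeTab : Type := Tab μ r →₀ K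

/-- The relations `T + S = 0`, for `S` obtained from `T` by a transposition of two entries
in the same column. -/
def colRel : Submodule K (FreeTab K μ r) :=
  Submodule.span K
    {x | ∃ (T : Tab μ r) (c : Fin L) (j₁ j₂ : Fin (μ c)), j₁ ≠ j₂ ∧
      x = Finsupp.single T 1 +
        Finsupp.single ((Equiv.swap (⟨c, j₁⟩ : Cell μ) ⟨c, j₂⟩).trans T) 1}

/-- The module `M^λ` spanned by column tabloids. -/
abbrev MLam : Type := FreeTab K μ r ⧸ colRel K μ r

/-- The column tabloid of a tableau. -/
def tabloid (T : Tab μ r) : MLam K μ r :=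
  Submodule.Quotient.mk (Finsupp.single T 1)

/-- `ρ` is the action of the symmetric group `𝔖_r` on `M^λ` by relabelling entries. -/
def IsTabAction (ρ : Equiv.Perm (Fin r) → (MLam K μ r →ₗ[K] MLam K μ r)) : Prop :=
  ∀ (σ : Equiv.Perm (Fin r)) (T : Tab μ r), ρ σ (tabloid K μ r T) = tabloid K μ r (T.trans σ)

/-- The permutation of the cells exchanging the top `k` cells of column `c+1` with
the `k` cells of column `c` recorded by `A`, in increasing row order. -/
def exchPerm (c : ℕ) (hc : c + 1 < L) (k : ℕ) (hk : k ≤ μ ⟨c+1, hc⟩)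
    (A : Finset (Fin (μ ⟨c, by omega⟩))) (hA : A.card = k) : Equiv.Perm (Cell μ) :=
  (List.ofFn (fun i : Fin k =>
    Equiv.swap (⟨⟨c, by omega⟩, ((A.orderIsoOfFin hA i : A) : Fin (μ ⟨c, by omega⟩))⟩ : Cell μ)
      ⟨⟨c+1, hc⟩, ⟨i.val, by omega⟩⟩)).prod

/-- The Garnir element `g^T_{c,k} = T̄ - Σ S̄ ∈ M^λ`, the sum being over all tableaux `S`
obtained from `T` by exchanging the top `k` entries of column `c+1` with `k` entries of
column `c`, maintaining the vertical order of each exchanged set. -/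
def garnirElt (T : Tab μ r) (c : ℕ) (hc : c + 1 < L) (k : ℕ) (hk : k ≤ μ ⟨c+1, hc⟩) :
    MLam K μ r :=
  tabloid K μ r T -
    ∑ A ∈ (Finset.powersetCard k (Finset.univ : Finset (Fin (μ ⟨c, by omega⟩)))).attach,
      tabloid K μ r
        ((exchPerm μ c hc k hk A.1 (Finset.mem_powersetCard.mp A.2).2).trans T)

/-- The permutation of the cells exchanging the `k` cells of column `c+1` recorded by `B`
with the `k` cells of column `c` recorded by `A`, in increasing row order. -/
def exch2Perm (c : ℕ) (hc : c + 1 < L)  (k : ℕ)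
    (A : Finset (Fin (μ ⟨c, by omega⟩))) (hA : A.card = k)
    (B : Finset (Fin (μ ⟨c+1, hc⟩))) (hB : B.card = k) : Equiv.Perm (Cell μ) :=
  (List.ofFn (fun i : Fin k =>
    Equiv.swap (⟨⟨c, by omega⟩, ((A.orderIsoOfFin hA i : A) : Fin (μ ⟨c, by omega⟩))⟩ : Cell μ)
      ⟨⟨c+1, hc⟩, ((B.orderIsoOfFin hB i : B) : Fin (μ ⟨c+1, hc⟩))⟩)).prod

/-- The symmetrized Garnir element `r^T_{c,k} = C(μ_{c+1},k)·T̄ - Σ S̄ ∈ M^λ`, the sum being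
over all tableaux `S` obtained from `T` by exchanging any `k` entries of column `c+1` with
any `k` entries of column `c`, maintaining the vertical order of each exchanged set. -/
def sgrElt (T : Tab μ r) (c : ℕ) (hc : c + 1 < L) (k : ℕ) : MLam K μ r :=
  ((μ ⟨c+1, hc⟩).choose k : K) • tabloid K μ r T -
    ∑ A ∈ (Finset.powersetCard k (Finset.univ : Finset (Fin (μ ⟨c, by omega⟩)))).attach,
      ∑ B ∈ (Finset.powersetCard k (Finset.univ : Finset (Fin (μ ⟨c+1, hc⟩)))).attach,
        tabloid K μ r
          ((exch2Perm μ c hc k A.1 (Finset.mem_powersetCard.mp A.2).2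
              B.1 (Finset.mem_powersetCard.mp B.2).2).trans T)

/-- The subspace `G^λ ⊆ M^λ` spanned by all Garnir relations. -/
def garnirSub : Submodule K (MLam K μ r) :=
  Submodule.span K
    {x | ∃ (T : Tab μ r) (c : ℕ) (hc : c + 1 < L) (k : ℕ) (hk : k ≤ μ ⟨c+1, hc⟩),
      x = garnirElt K μ r T c hc k hk}

/-- The subspace `GR^λ(k_1, …, k_{λ_1 - 1}) ⊆ M^λ` spanned by the Garnir relations
`g^T_{c,k_c}`. -/
def grSub (kk : ℕ → ℕ) : Submodule K (MLam K μ r) :=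
  Submodule.span K
    {x | ∃ (T : Tab μ r) (c : ℕ) (hc : c + 1 < L) (hk : kk c ≤ μ ⟨c+1, hc⟩),
      x = garnirElt K μ r T c hc (kk c) hk}

/-- The subspace `SGR^λ(k_1, …, k_{λ_1 - 1}) ⊆ M^λ` spanned by the symmetrized Garnir
relations `r^T_{c,k_c}`. -/
def sgrSub (kk : ℕ → ℕ) : Submodule K (MLam K μ r) :=
  Submodule.span K
    {x | ∃ (T : Tab μ r) (c : ℕ) (hc : c + 1 < L), x = sgrElt K μ r T c hc (kk c)}

/-- Quotients `M₁ ⧸ N₁` and `M₂ ⧸ N₂` are isomorphic compatibly with the given actions. -/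
def IsQuotIso {G' : Type} {M₁ M₂ : Type} [AddCommGroup M₁] [Module K M₁]
    [AddCommGroup M₂] [Module K M₂]
    (N₁ : Submodule K M₁) (N₂ : Submodule K M₂)
    (ρ₁ : G' → M₁ →ₗ[K] M₁) (ρ₂ : G' → M₂ →ₗ[K] M₂) : Prop :=
  ∃ e : (M₁ ⧸ N₁) ≃ₗ[K] (M₂ ⧸ N₂),
    ∀ (g : G') (x : M₁) (y : M₂),
      e (Submodule.Quotient.mk x) = Submodule.Quotient.mk y →
      e (Submodule.Quotient.mk (ρ₁ g x)) = Submodule.Quotient.mk (ρ₂ g y)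

end Specht

namespace Specht

section SubsetSums

variable {α V : Type*} [DecidableEq α] [AddCommGroup V]

/-- The sum of `φ` over the `k`-subsets of `U` that contain `D`. -/
def upperSum (U : Finset α) (k : ℕ) (φ : Finset α → V) (D : Finset α) : V :=
  ∑ B ∈ U.powersetCard k with D ⊆ B, φ B

lemma sum_powersetCard_sdiff_eq (U D : Finset α) (k : ℕ) (φ : Finset α → V) :
    ∑ B ∈ (U \ D).powersetCard k, φ B =
      ∑ E ∈ D.powerset, (-1 : ℤ) ^ E.card • upperSum U k φ E := by
  have h1 : ∀ B : Finset α, (∑ E ∈ D.powerset, if E ⊆ B then (-1 : ℤ) ^ E.card else 0) =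
      if D ∩ B = ∅ then 1 else 0 := by
    intro B
    rw [← Finset.sum_powerset_neg_one_pow_card, ← Finset.sum_filter]
    refine Finset.sum_congr ?_ fun _ _ => rfl
    ext E
    simp only [Finset.mem_filter, Finset.mem_powerset, Finset.subset_inter_iff]
  calc ∑ B ∈ (U \ D).powersetCard k, φ B
      = ∑ B ∈ U.powersetCard k, (if D ∩ B = ∅ then (1 : ℤ) else 0) • φ B := by
        simp only [ite_smul, one_smul, zero_smul]
        rw [← Finset.sum_filter]
        refine Finset.sum_congr ?_ fun _ _ => rfl
        ext B
        simp only [Finset.mem_powersetCard, Finset.mem_filter, Finset.subset_sdiff,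
          ← Finset.disjoint_iff_inter_eq_empty]
        rw [disjoint_comm]
        tauto
    _ = ∑ E ∈ D.powerset, (-1 : ℤ) ^ E.card • upperSum U k φ E := by
        simp only [← h1, Finset.sum_smul, upperSum, Finset.sum_filter, Finset.smul_sum]
        rw [Finset.sum_comm]
        refine Finset.sum_congr rfl fun E _ => Finset.sum_congr rfl fun B _ => ?_
        split_ifs <;> simp

lemma upperSum_self {U B : Finset α} {k : ℕ} (φ : Finset α → V) (hB : B ∈ U.powersetCard k) :
    upperSum U k φ B = φ B := by
  rw [upperSum, Finset.sum_eq_single_of_mem B (by simp [hB])]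
  intro B' hB' hne
  simp only [Finset.mem_filter, Finset.mem_powersetCard] at hB' hB
  exact absurd (Finset.eq_of_subset_of_card_le hB'.2 (by omega)).symm hne

lemma upperSum_eq_sum_insert {U D : Finset α} {k : ℕ} (φ : Finset α → V)
    (hD : D ∈ U.powersetCard k) :
    upperSum U (k + 1) φ D = ∑ u ∈ U \ D, φ (insert u D) := by
  rw [Finset.mem_powersetCard] at hD
  symm
  refine Finset.sum_bij (fun u _ => insert u D) ?_ ?_ ?_ fun _ _ => rfl
  · intro u hu
    rw [Finset.mem_sdiff] at hu
    simp [Finset.insert_subset_iff, hu.1, hD.1, Finset.card_insert_of_notMem hu.2, hD.2]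
  · intro u hu v hv h
    rw [Finset.mem_sdiff] at hu hv
    have : u ∈ insert v D := h ▸ Finset.mem_insert_self u D
    simpa [hu.2] using this
  · intro B hB
    simp only [Finset.mem_filter, Finset.mem_powersetCard] at hB
    obtain ⟨u, hu⟩ := Finset.card_eq_one.mp
      (show (B \ D).card = 1 by rw [Finset.card_sdiff_of_subset hB.2]; omega)
    have huB : u ∈ B \ D := by simp [hu]
    rw [Finset.mem_sdiff] at huB
    refine ⟨u, by simp [huB.2, hB.1.1 huB.1], ?_⟩
    rw [← Finset.sdiff_union_of_subset hB.2, hu]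
    rfl

lemma sum_upperSum_insert (U D : Finset α) (k : ℕ) (φ : Finset α → V) :
    ∑ u ∈ U \ D, upperSum U k φ (insert u D) = ((k : ℤ) - D.card) • upperSum U k φ D := by
  simp only [upperSum, Finset.smul_sum, Finset.sum_filter]
  rw [Finset.sum_comm]
  refine Finset.sum_congr rfl fun B hB => ?_
  rw [Finset.mem_powersetCard] at hB
  by_cases hDB : D ⊆ B
  · rw [if_pos hDB, ← Finset.sum_filter]
    have : {u ∈ U \ D | insert u D ⊆ B} = B \ D := by
      ext u
      simp only [Finset.mem_filter, Finset.mem_sdiff, Finset.insert_subset_iff]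
      exact ⟨fun h => ⟨h.2.1, h.1.2⟩, fun h => ⟨⟨hB.1 h.1, h.2⟩, h.1, hDB⟩⟩
    rw [this, Finset.sum_const, Finset.card_sdiff_of_subset hDB, ← natCast_zsmul,
      Nat.cast_sub (Finset.card_le_card hDB), hB.2]
  · rw [if_neg hDB]
    rw [Finset.sum_eq_zero fun u _ => if_neg fun h => hDB ((Finset.subset_insert u D).trans h),
      smul_zero]

lemma card_filter_powersetCard_sdiff {U D B : Finset α} {k : ℕ} (hD : D ⊆ U)
    (hDB : Disjoint D B) (hDk : D.card ≤ k) :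
    {B' ∈ (U \ B).powersetCard k | D ⊆ B'}.card =
      ((U \ B).card - D.card).choose (k - D.card) := by
  have hDUB : D ⊆ U \ B := Finset.subset_sdiff.mpr ⟨hD, hDB⟩
  rw [← Finset.card_sdiff_of_subset hDUB, ← Finset.card_powersetCard]
  refine Finset.card_bij (fun B' _ => B' \ D) ?_ ?_ ?_
  · intro B' h
    simp only [Finset.mem_filter, Finset.mem_powersetCard] at h ⊢
    exact ⟨Finset.sdiff_subset_sdiff h.1.1 subset_rfl, by
      rw [Finset.card_sdiff_of_subset h.2, h.1.2]⟩
  · intro B₁ h₁ B₂ h₂ h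
    simp only [Finset.mem_filter] at h₁ h₂
    rw [← Finset.sdiff_union_of_subset h₁.2, ← Finset.sdiff_union_of_subset h₂.2, h]
  · intro E hE
    rw [Finset.mem_powersetCard, Finset.subset_sdiff] at hE
    refine ⟨E ∪ D, ?_, ?_⟩
    · simp only [Finset.mem_filter, Finset.mem_powersetCard]
      refine ⟨⟨Finset.union_subset hE.1.1 hDUB, ?_⟩, Finset.subset_union_right⟩
      rw [Finset.card_union_of_disjoint hE.1.2]
      omega
    · exact Finset.union_sdiff_cancel_right hE.1.2

lemma upperSum_eq_choose_smul {U D : Finset α} {k m : ℕ} {φ : Finset α → V}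
    (hU : U.card = m + k) (hD : D ⊆ U) (hDk : D.card ≤ k)
    (h : ∀ B ∈ U.powersetCard k, φ B = (-1 : ℤ) ^ k • ∑ B' ∈ (U \ B).powersetCard k, φ B') :
    upperSum U k φ D = ((-1 : ℤ) ^ k * (m - D.card).choose (k - D.card)) •
      ∑ B' ∈ (U \ D).powersetCard k, φ B' := by
  have hswap : upperSum U k φ D = (-1 : ℤ) ^ k • ∑ B' ∈ U.powersetCard k,
      ∑ B ∈ U.powersetCard k, if D ⊆ B ∧ Disjoint B B' then φ B' else 0 := by
    rw [Finset.sum_comm, Finset.smul_sum, upperSum, Finset.sum_filter]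
    refine Finset.sum_congr rfl fun B hB => ?_
    by_cases hDB : D ⊆ B
    · simp only [hDB, true_and, if_true]
      rw [h B hB, ← Finset.sum_filter]
      congr 1
      refine Finset.sum_congr ?_ fun _ _ => rfl
      ext B'
      simp only [Finset.mem_powersetCard, Finset.mem_filter, Finset.subset_sdiff]
      rw [disjoint_comm]
      tauto
    · simp [hDB]
  rw [hswap, mul_smul, Finset.smul_sum (N := V) (s := (U \ D).powersetCard k)]
  congr 1
  rw [← Finset.sum_subset (Finset.powersetCard_mono (n := k) (Finset.sdiff_subset (s := U) (t := D)))]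
  · refine Finset.sum_congr rfl fun B' hB' => ?_
    rw [Finset.mem_powersetCard, Finset.subset_sdiff] at hB'
    rw [← Finset.sum_filter, Finset.sum_const, natCast_zsmul]
    congr 1
    have := card_filter_powersetCard_sdiff hD hB'.1.2.symm hDk
    rw [Finset.card_sdiff_of_subset hB'.1.1, hU, hB'.2, Nat.add_sub_cancel] at this
    rw [← this]
    congr 1
    ext B
    simp only [Finset.mem_powersetCard, Finset.mem_filter, Finset.subset_sdiff]
    tauto
  · intro B' hB' hn
    refine Finset.sum_eq_zero fun B hB => if_neg fun hh => hn ?_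
    rw [Finset.mem_powersetCard] at hB' ⊢
    exact ⟨Finset.subset_sdiff.mpr ⟨hB'.1, (Finset.disjoint_of_subset_left hh.1 hh.2).symm⟩, hB'.2⟩

variable [IsAddTorsionFree V]

lemma upperSum_eq_zero_of_card_lt {U : Finset α} {k : ℕ} {φ : Finset α → V}
    (h : ∀ D ⊆ U, D.card + 1 = k → upperSum U k φ D = 0) :
    ∀ D ⊆ U, D.card < k → upperSum U k φ D = 0 := by
  suffices H : ∀ n, ∀ D ⊆ U, D.card + 1 + n = k → upperSum U k φ D = 0 from
    fun D hD hk => H (k - D.card - 1) D hD (by omega)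
  intro n
  induction n with
  | zero => exact h
  | succ n ih =>
    intro D hD hk
    have h0 : ((k : ℤ) - D.card) • upperSum U k φ D = 0 := by
      rw [← sum_upperSum_insert U D k φ]
      refine Finset.sum_eq_zero fun u hu => ?_
      rw [Finset.mem_sdiff] at hu
      refine ih _ (Finset.insert_subset hu.1 hD) ?_
      rw [Finset.card_insert_of_notMem hu.2]
      omega
    exact (smul_eq_zero.mp h0).resolve_left (by omega)

/-- If the sum of `φ` over the `k`-sets containing any given `(k-1)`-set vanishes, then `φ` is an
eigenvector of the Kneser matrix for the eigenvalue `(-1) ^ k`. -/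
lemma eq_sum_sdiff_of_upperSum_eq_zero {U : Finset α} {k : ℕ} {φ : Finset α → V}
    (h : ∀ D ⊆ U, D.card + 1 = k → upperSum U k φ D = 0) {B : Finset α}
    (hB : B ∈ U.powersetCard k) :
    φ B = (-1 : ℤ) ^ k • ∑ B' ∈ (U \ B).powersetCard k, φ B' := by
  have hB' := Finset.mem_powersetCard.mp hB
  rw [sum_powersetCard_sdiff_eq, Finset.sum_eq_single_of_mem B (by simp), upperSum_self φ hB,
    smul_smul, hB'.2, ← mul_pow]
  · simp
  · intro E hE hne
    rw [Finset.mem_powerset] at hE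
    have hlt := Finset.card_lt_card (hE.ssubset_of_ne hne)
    rw [upperSum_eq_zero_of_card_lt h E (hE.trans hB'.1) (by omega), smul_zero]

/-- An eigenvector of the Kneser matrix of `k`-subsets of an `(m+k)`-set for the eigenvalue
`(-1) ^ k` sums to zero over the `k`-sets containing a given smaller set. -/
lemma upperSum_eq_zero_of_eq_sum_sdiff {U : Finset α} {k m : ℕ} {φ : Finset α → V}
    (hU : U.card = m + k) (hkm : k < m ∨ (k = 1 ∧ m = 1))
    (h : ∀ B ∈ U.powersetCard k, φ B = (-1 : ℤ) ^ k • ∑ B' ∈ (U \ B).powersetCard k, φ B') :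
    ∀ D ⊆ U, D.card < k → upperSum U k φ D = 0 := by
  intro D
  induction D using Finset.strongInduction with
  | H D ih =>
    intro hD hDk
    have h1 := upperSum_eq_choose_smul hU hD hDk.le h
    rw [sum_powersetCard_sdiff_eq, Finset.sum_eq_single_of_mem D (by simp), smul_smul] at h1
    · have h2 : (1 - (-1 : ℤ) ^ k * (m - D.card).choose (k - D.card) * (-1) ^ D.card) •
          upperSum U k φ D = 0 := by
        rw [sub_smul, one_smul, ← h1, sub_self]
      refine (smul_eq_zero.mp h2).resolve_left fun h3 => ?_
      rcases hkm with hkm | ⟨rfl, rfl⟩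
      · have h4 : 1 < (m - D.card).choose (k - D.card) := by
          have h5 := Nat.choose_pos (show k - D.card ≤ m - D.card by omega)
          have h6 := mt Nat.choose_eq_one_iff.mp (show ¬ (k - D.card = 0 ∨ m - D.card = k - D.card) by omega)
          omega
        have h5 : ((m - D.card).choose (k - D.card)).cast = (-1 : ℤ) ^ k * (-1) ^ D.card := by
          have e1 : ((-1 : ℤ) ^ k * (-1) ^ k) = 1 := by rw [← mul_pow]; simp
          have e2 : ((-1 : ℤ) ^ D.card * (-1) ^ D.card) = 1 := by rw [← mul_pow]; simp
          linear_combination (-(-1 : ℤ) ^ k * (-1) ^ D.card) * h3 - ((m - D.card).choose (k - D.card) : ℤ) * e1 * (-1) ^ D.card * (-1) ^ D.card - ((m - D.card).choose (k - D.card) : ℤ) * e2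
        rw [← pow_add] at h5
        rcases neg_one_pow_eq_or ℤ (k + D.card) with h6 | h6 <;> rw [h6] at h5 <;> omega
      · have : D.card = 0 := by omega
        simp [this] at h3
    · intro E hE hne
      rw [Finset.mem_powerset] at hE
      have hss := hE.ssubset_of_ne hne
      rw [ih E hss (hE.trans hD) ((Finset.card_lt_card hss).trans hDk), smul_zero]

end SubsetSums
section SetFunctions

open Equiv

variable {α V : Type*} [DecidableEq α] [AddCommGroup V]

lemma perm_apply_mem {U : Finset α} {p : Perm α} (hp : ∀ x ∉ U, p x = x) {x : α} :
    p x ∈ U ↔ x ∈ U := by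
  constructor
  · intro h
    by_contra hx
    exact hx (hp x hx ▸ h)
  · intro h
    by_contra hx
    exact hx ((p.injective (hp _ hx)).symm ▸ h)

lemma map_perm_eq {U : Finset α} {p : Perm α} (hp : ∀ x ∉ U, p x = x) :
    U.map p.toEmbedding = U := by
  refine Finset.eq_of_subset_of_card_le ?_ (by simp)
  intro x hx
  rw [Finset.mem_map] at hx
  obtain ⟨y, hy, rfl⟩ := hx
  exact (perm_apply_mem hp).mpr hy

lemma exists_perm_map_eq (U C B : Finset α) (hC : C ⊆ U) (hB : B ⊆ U) (h : C.card = B.card) :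
    ∃ p : Perm α, (∀ x ∉ U, p x = x) ∧ C.map p.toEmbedding = B := by
  generalize hn : (C \ B).card = n
  induction n generalizing C with
  | zero =>
    rw [Finset.card_eq_zero, Finset.sdiff_eq_empty_iff_subset] at hn
    refine ⟨1, fun _ _ => rfl, ?_⟩
    rw [← Finset.eq_of_subset_of_card_le hn h.ge]
    exact Finset.map_refl
  | succ n ih =>
    obtain ⟨c, hc⟩ := Finset.card_pos.mp (show 0 < (C \ B).card by omega)
    obtain ⟨b, hb⟩ := Finset.card_pos.mp
      (show 0 < (B \ C).card by rw [← Finset.card_sdiff_comm h]; omega)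
    have hc' := Finset.mem_sdiff.mp hc
    have hb' := Finset.mem_sdiff.mp hb
    have hs : ∀ x ∉ U, swap c b x = x := fun x hx =>
      swap_apply_of_ne_of_ne (fun e => hx (e ▸ hC hc'.1)) (fun e => hx (e ▸ hB hb'.1))
    have hmem : ∀ x, x ∈ C.map (swap c b).toEmbedding ↔ swap c b x ∈ C := fun x => by
      rw [Finset.mem_map_equiv, symm_swap]
    obtain ⟨p, hp, hpC⟩ := ih (C.map (swap c b).toEmbedding)
      (fun x hx => (perm_apply_mem hs).mp (hC ((hmem x).mp hx))) (by simpa using h) (by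
        have : C.map (swap c b).toEmbedding \ B = (C \ B).erase c := by
          ext x
          rw [Finset.mem_sdiff, hmem, Finset.mem_erase, Finset.mem_sdiff]
          rcases eq_or_ne x c with rfl | hxc
          · simp [hb'.2]
          rcases eq_or_ne x b with rfl | hxb
          · simp [hb'.1]
          · simp [swap_apply_of_ne_of_ne hxc hxb, hxc]
        rw [this, Finset.card_erase_of_mem hc, hn, Nat.add_sub_cancel])
    refine ⟨p * swap c b, fun x hx => by rw [Perm.mul_apply, hs x hx, hp x hx], ?_⟩
    rw [← hpC, Finset.map_map]
    rfl

lemma union_sdiff_map {X C : Finset α} (hXC : Disjoint X C) {p : Perm α} (hp : ∀ x ∉ X ∪ C, p x = x) :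
    (X ∪ C) \ C.map p.toEmbedding = X.map p.toEmbedding := by
  conv_lhs => rw [← map_perm_eq hp, ← Finset.map_sdiff]
  rw [Finset.union_sdiff_cancel_right hXC]

variable [Fintype α]

open Classical in
/-- The function on subsets of `X ∪ C` sending `p(C)` to `sign p • f p`, for `p` a permutation
supported on `X ∪ C`. -/
def setFun (X C : Finset α) (f : Perm α → V) (B : Finset α) : V :=
  if h : ∃ p : Perm α, (∀ x ∉ X ∪ C, p x = x) ∧ C.map p.toEmbedding = B then
    (Perm.sign h.choose : ℤ) • f h.choose
  else 0

/-- The function `f` transforms by the sign under right multiplication by permutations of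
`X ∪ C` preserving `X` and `C`. -/
def IsSignEquivariant (X C : Finset α) (f : Perm α → V) : Prop :=
  ∀ p h : Perm α, (∀ x ∈ X, h x ∈ X) → (∀ x ∈ C, h x ∈ C) → (∀ x ∉ X ∪ C, h x = x) →
    f (p * h) = (Perm.sign h : ℤ) • f p

variable {X C : Finset α} {f : Perm α → V}

lemma setFun_map (hXC : Disjoint X C) (hf : IsSignEquivariant X C f) {p : Perm α}
    (hp : ∀ x ∉ X ∪ C, p x = x) :
    setFun X C f (C.map p.toEmbedding) = (Perm.sign p : ℤ) • f p := by
  have hex : ∃ p' : Perm α, (∀ x ∉ X ∪ C, p' x = x) ∧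
      C.map p'.toEmbedding = C.map p.toEmbedding := ⟨p, hp, rfl⟩
  rw [setFun, dif_pos hex]
  obtain ⟨h1, h2⟩ := hex.choose_spec
  generalize hex.choose = s at h1 h2
  have hfix : ∀ x ∉ X ∪ C, (p⁻¹ * s) x = x := fun x hx => by
    rw [Perm.mul_apply, h1 x hx, Perm.inv_eq_iff_eq, hp x hx]
  have hC : ∀ x, (p⁻¹ * s) x ∈ C ↔ x ∈ C := fun x => by
    have : s x ∈ C.map s.toEmbedding ↔ s x ∈ C.map p.toEmbedding := by rw [h2]
    rw [Finset.mem_map_equiv, Finset.mem_map_equiv, symm_apply_apply] at this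
    exact this.symm
  have hX : ∀ x ∈ X, (p⁻¹ * s) x ∈ X := fun x hx => by
    have h3 := (perm_apply_mem hfix).mpr (Finset.mem_union_left C hx)
    exact (Finset.mem_union.mp h3).resolve_right fun h4 =>
      Finset.disjoint_left.mp hXC hx ((hC x).mp h4)
  have h3 := hf p (p⁻¹ * s) hX (fun x hx => (hC x).mpr hx) hfix
  rw [mul_inv_cancel_left] at h3
  rw [h3, smul_smul, ← Units.val_mul, ← Perm.sign_mul]
  rw [Perm.sign_mul, Perm.sign_mul, Perm.sign_inv, mul_left_comm, Int.units_mul_self, mul_one]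

lemma apply_mul_eq_setFun (hXC : Disjoint X C) (hf : IsSignEquivariant X C f) {p e : Perm α}
    (hp : ∀ x ∉ X ∪ C, p x = x) (he : ∀ x ∉ X ∪ C, e x = x) :
    f (p * e) = ((Perm.sign p : ℤ) * Perm.sign e) •
      setFun X C f ((C.map e.toEmbedding).map p.toEmbedding) := by
  have h : (C.map e.toEmbedding).map p.toEmbedding = C.map (p * e).toEmbedding := by
    rw [Finset.map_map]
    rfl
  rw [h, setFun_map hXC hf fun x hx => by rw [Perm.mul_apply, he x hx, hp x hx], smul_smul,
    ← Units.val_mul, ← Perm.sign_mul, ← Units.val_mul, Int.units_mul_self, Units.val_one, one_smul]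

end SetFunctions

section Garnir

open Equiv

lemma prod_ofFn_swap_apply {α : Type*} [DecidableEq α] (k : ℕ) (a b : Fin k → α)
    (ha : Function.Injective a) (hb : Function.Injective b) (hab : ∀ i j, a i ≠ b j) :
    (∀ i, (List.ofFn fun i => swap (a i) (b i)).prod (b i) = a i) ∧
      ∀ x, (∀ i, x ≠ a i) → (∀ i, x ≠ b i) →
        (List.ofFn fun i => swap (a i) (b i)).prod x = x := by
  induction k with
  | zero => exact ⟨fun i => i.elim0, fun x _ _ => by simp⟩
  | succ k ih =>
    obtain ⟨h1, h2⟩ := ih (fun i => a i.succ) (fun i => b i.succ)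
      (fun i j h => Fin.succ_injective _ (ha h)) (fun i j h => Fin.succ_injective _ (hb h))
      fun i j => hab _ _
    simp only [List.ofFn_succ, List.prod_cons, Perm.mul_apply]
    refine ⟨fun i => ?_, fun x hxa hxb => ?_⟩
    · refine Fin.cases ?_ (fun i => ?_) i
      · rw [h2 _ (fun i => (hab _ _).symm) fun i h => absurd (hb h) (Fin.succ_ne_zero i).symm,
          swap_apply_right]
      · rw [h1, swap_apply_of_ne_of_ne (fun h => absurd (ha h) (Fin.succ_ne_zero i)) (hab _ _)]
    · rw [h2 x (fun i => hxa _) fun i => hxb _, swap_apply_of_ne_of_ne (hxa 0) (hxb 0)]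

lemma sign_prod_ofFn_swap {α : Type*} [DecidableEq α] [Fintype α] (k : ℕ) (a b : Fin k → α)
    (hab : ∀ i, a i ≠ b i) :
    Perm.sign (List.ofFn fun i => swap (a i) (b i)).prod = (-1) ^ k := by
  rw [map_list_prod, List.map_ofFn, List.prod_ofFn]
  simp [Perm.sign_swap (hab _)]

variable {K : Type} [Field K] {L : ℕ} {μ : Fin L → ℕ} {r : ℕ}

variable (μ) in
/-- The cells of column `c` whose rows lie in `A`. -/
def cellsOf (c : Fin L) (A : Finset (Fin (μ c))) : Finset (Cell μ) :=
  A.map (Function.Embedding.sigmaMk c)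

variable (μ) in
/-- The top `k` cells of column `c`. -/
def topCells (c : Fin L) (k : ℕ) : Finset (Cell μ) :=
  cellsOf μ c {j | j.val < k}

lemma mem_cellsOf {c : Fin L} {A : Finset (Fin (μ c))} {x : Cell μ} :
    x ∈ cellsOf μ c A ↔ ∃ j ∈ A, (⟨c, j⟩ : Cell μ) = x := by
  simp [cellsOf]

lemma fst_of_mem_cellsOf {c : Fin L} {A : Finset (Fin (μ c))} {x : Cell μ}
    (h : x ∈ cellsOf μ c A) : x.1 = c := by
  obtain ⟨j, -, rfl⟩ := mem_cellsOf.mp h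
  rfl

lemma mem_cellsOf_univ {c : Fin L} {x : Cell μ} :
    x ∈ cellsOf μ c Finset.univ ↔ x.1 = c := by
  refine ⟨fst_of_mem_cellsOf, ?_⟩
  rintro rfl
  exact mem_cellsOf.mpr ⟨x.2, Finset.mem_univ _, rfl⟩

lemma card_topCells {c : Fin L} {k : ℕ} (hk : k ≤ μ c) : (topCells μ c k).card = k := by
  rw [topCells, cellsOf, Finset.card_map, Fin.card_filter_val_lt, min_eq_right hk]

lemma disjoint_cellsOf {c c' : Fin L} (h : c ≠ c') (A : Finset (Fin (μ c)))
    (A' : Finset (Fin (μ c'))) : Disjoint (cellsOf μ c A) (cellsOf μ c' A') :=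
  Finset.disjoint_left.mpr fun _ hx hx' => h (fst_of_mem_cellsOf hx ▸ fst_of_mem_cellsOf hx')

lemma castSucc_ne {c : ℕ} (hc : c + 1 < L) : (⟨c, by omega⟩ : Fin L) ≠ ⟨c + 1, hc⟩ := by
  simp

variable {V : Type*} [AddCommGroup V] [Module K V]

/-- The image of the class of the tableau `T` rearranged by a permutation of the cells. -/
def orbitFun (q : MLam K μ r →ₗ[K] V) (T : Tab μ r) (p : Perm (Cell μ)) : V :=
  q (tabloid K μ r (p.trans T))

/-- The function on `k`-subsets attached to exchanges between column `c` and the top `k` cells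
of column `c + 1`. -/
abbrev exchFun (q : MLam K μ r →ₗ[K] V) (T : Tab μ r) (c : ℕ) (hc : c + 1 < L) (k : ℕ) : Finset (Cell μ) → V :=
  setFun (cellsOf μ ⟨c, by omega⟩ Finset.univ) (topCells μ ⟨c+1, hc⟩ k) (orbitFun q T)

variable {c : ℕ} {hc : c + 1 < L}

lemma sign_exchPerm {k : ℕ} {hk : k ≤ μ ⟨c+1, hc⟩}
    {A : Finset (Fin (μ ⟨c, by omega⟩))} {hA : A.card = k} :
    Perm.sign (exchPerm μ c hc k hk A hA) = (-1) ^ k :=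
  sign_prod_ofFn_swap _ _ _ fun _ h => castSucc_ne hc (congrArg Sigma.fst h)

lemma exchPerm_apply_top {k : ℕ} {hk : k ≤ μ ⟨c+1, hc⟩}
    {A : Finset (Fin (μ ⟨c, by omega⟩))} {hA : A.card = k} (i : Fin k) :
    exchPerm μ c hc k hk A hA ⟨⟨c+1, hc⟩, ⟨i.val, by omega⟩⟩ =
      ⟨⟨c, by omega⟩, (A.orderIsoOfFin hA i : A)⟩ := by
  refine (prod_ofFn_swap_apply k (fun i => (⟨⟨c, by omega⟩, (A.orderIsoOfFin hA i : A)⟩ : Cell μ))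
    (fun i => ⟨⟨c+1, hc⟩, ⟨i.val, by omega⟩⟩) ?_ ?_ ?_).1 i
  · intro i j h
    have h' : (A.orderIsoOfFin hA i : Fin (μ ⟨c, by omega⟩)) = A.orderIsoOfFin hA j :=
      sigma_mk_injective (i := (⟨c, by omega⟩ : Fin L)) h
    exact (A.orderIsoOfFin hA).injective (Subtype.ext h')
  · intro i j h
    simpa [Fin.ext_iff] using sigma_mk_injective h
  · intro i j h
    exact castSucc_ne hc (congrArg Sigma.fst h)

lemma exchPerm_apply_of_notMem {k : ℕ} {hk : k ≤ μ ⟨c+1, hc⟩}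
    {A : Finset (Fin (μ ⟨c, by omega⟩))} {hA : A.card = k}
    {x : Cell μ} (hx : x ∉ cellsOf μ ⟨c, by omega⟩ A)
    (hx' : x ∉ topCells μ ⟨c+1, hc⟩ k) : exchPerm μ c hc k hk A hA x = x := by
  refine (prod_ofFn_swap_apply k (fun i => (⟨⟨c, by omega⟩, (A.orderIsoOfFin hA i : A)⟩ : Cell μ))
    (fun i => ⟨⟨c+1, hc⟩, ⟨i.val, by omega⟩⟩) ?_ ?_ ?_).2 x ?_ ?_
  · intro i j h
    have h' : (A.orderIsoOfFin hA i : Fin (μ ⟨c, by omega⟩)) = A.orderIsoOfFin hA j :=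
      sigma_mk_injective (i := (⟨c, by omega⟩ : Fin L)) h
    exact (A.orderIsoOfFin hA).injective (Subtype.ext h')
  · intro i j h
    simpa [Fin.ext_iff] using sigma_mk_injective h
  · intro i j h
    exact castSucc_ne hc (congrArg Sigma.fst h)
  · rintro i rfl
    exact hx (mem_cellsOf.mpr ⟨_, (A.orderIsoOfFin hA i).2, rfl⟩)
  · rintro i rfl
    exact hx' (mem_cellsOf.mpr ⟨_, by simp, rfl⟩)

lemma map_exchPerm_topCells {k : ℕ} {hk : k ≤ μ ⟨c+1, hc⟩}
    {A : Finset (Fin (μ ⟨c, by omega⟩))} {hA : A.card = k} :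
    (topCells μ ⟨c+1, hc⟩ k).map (exchPerm μ c hc k hk A hA).toEmbedding =
      cellsOf μ ⟨c, by omega⟩ A := by
  refine Finset.eq_of_subset_of_card_le ?_ ?_
  · intro x hx
    rw [Finset.mem_map] at hx
    obtain ⟨y, hy, rfl⟩ := hx
    obtain ⟨j, hj, rfl⟩ := mem_cellsOf.mp hy
    rw [Finset.mem_filter] at hj
    exact mem_cellsOf.mpr ⟨_, (A.orderIsoOfFin hA ⟨j, hj.2⟩).2, (exchPerm_apply_top ⟨j, hj.2⟩).symm⟩
  · rw [Finset.card_map, card_topCells hk, cellsOf, Finset.card_map, hA]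

lemma tabloid_trans_of_preserves (h : Perm (Cell μ)) (hh : ∀ x, (h x).1 = x.1) (T : Tab μ r) :
    tabloid K μ r (h.trans T) = (Perm.sign h : ℤ) • tabloid K μ r T := by
  have hswap : ∀ (x y : Cell μ), x ≠ y → x.1 = y.1 → ∀ T : Tab μ r,
      tabloid K μ r ((swap x y).trans T) = -tabloid K μ r T := by
    rintro ⟨c, i⟩ ⟨c', j⟩ hne hxy T
    obtain rfl : c = c' := hxy
    rw [eq_neg_iff_add_eq_zero, add_comm, tabloid, tabloid, ← Submodule.Quotient.mk_add,
      Submodule.Quotient.mk_eq_zero]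
    exact Submodule.subset_span ⟨T, c, i, j, fun e => hne (e ▸ rfl), rfl⟩
  generalize hn : h.support.card = n
  induction n using Nat.strong_induction_on generalizing h T with
  | _ n ih =>
    by_cases h1 : h = 1
    · subst h1
      simp only [Perm.sign_one, Units.val_one, one_smul]
      rfl
    · obtain ⟨x, hx⟩ : ∃ x, h x ≠ x := by
        by_contra! hcon
        exact h1 (Equiv.ext hcon)
      have hlt := Perm.card_support_swap_mul hx
      have hpres : ∀ y, ((swap x (h x) * h) y).1 = y.1 := fun y => by
        rw [Perm.mul_apply, swap_apply_def]
        split_ifs with h2 h3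
        · rw [hh, ← hh y, h2]
        · rw [← hh y, h3, hh]
        · exact hh y
      have h2 := ih _ (hn ▸ hlt) (swap x (h x) * h) hpres ((swap x (h x)).trans T) rfl
      have h3 : (swap x (h x) * h).trans ((swap x (h x)).trans T) = h.trans T := by
        ext y
        simp
      rw [h3, hswap _ _ (Ne.symm hx) (hh x).symm] at h2
      rw [h2, Perm.sign_mul, Perm.sign_swap (Ne.symm hx)]
      simp

lemma isSignEquivariant_orbitFun (q : MLam K μ r →ₗ[K] V) (T : Tab μ r) (c₀ c₁ : Fin L)
    (A : Finset (Fin (μ c₁))) :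
    IsSignEquivariant (cellsOf μ c₀ Finset.univ) (cellsOf μ c₁ A) (orbitFun q T) := by
  intro p h h0 h1 h2
  have hh : ∀ x, (h x).1 = x.1 := by
    intro x
    by_cases hx0 : x ∈ cellsOf μ c₀ Finset.univ
    · rw [fst_of_mem_cellsOf hx0, fst_of_mem_cellsOf (h0 x hx0)]
    by_cases hx1 : x ∈ cellsOf μ c₁ A
    · rw [fst_of_mem_cellsOf hx1, fst_of_mem_cellsOf (h1 x hx1)]
    · rw [h2 x (by simp [hx0, hx1])]
  have := tabloid_trans_of_preserves (K := K) h hh (p.trans T)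
  rw [orbitFun, orbitFun, ← map_zsmul, ← this]
  rfl

lemma exchPerm_apply_of_notMem_union {k : ℕ} {hk : k ≤ μ ⟨c+1, hc⟩}
    {A : Finset (Fin (μ ⟨c, by omega⟩))} {hA : A.card = k}
    {x : Cell μ}
    (hx : x ∉ cellsOf μ ⟨c, by omega⟩ Finset.univ ∪ topCells μ ⟨c+1, hc⟩ k) :
    exchPerm μ c hc k hk A hA x = x := by
  rw [Finset.mem_union, not_or] at hx
  refine exchPerm_apply_of_notMem (fun h => hx.1 ?_) hx.2
  exact mem_cellsOf_univ.mpr (fst_of_mem_cellsOf h)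

lemma map_garnirElt (q : MLam K μ r →ₗ[K] V) (T : Tab μ r) {k : ℕ}
    (hk : k ≤ μ ⟨c+1, hc⟩) {p : Perm (Cell μ)}
    (hp : ∀ x ∉ cellsOf μ ⟨c, by omega⟩ Finset.univ ∪ topCells μ ⟨c+1, hc⟩ k, p x = x) :
    q (garnirElt K μ r (p.trans T) c hc k hk) = (Perm.sign p : ℤ) •
      (exchFun q T c hc k ((topCells μ ⟨c+1, hc⟩ k).map p.toEmbedding) -
        (-1 : ℤ) ^ k • ∑ B ∈ ((cellsOf μ ⟨c, by omega⟩ Finset.univ ∪ topCells μ ⟨c+1, hc⟩ k) \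
          (topCells μ ⟨c+1, hc⟩ k).map p.toEmbedding).powersetCard k, exchFun q T c hc k B) := by
  have hd : Disjoint (cellsOf μ ⟨c, by omega⟩ Finset.univ) (topCells μ ⟨c+1, hc⟩ k) :=
    disjoint_cellsOf (castSucc_ne hc) _ _
  have hf : IsSignEquivariant (cellsOf μ ⟨c, by omega⟩ Finset.univ) (topCells μ ⟨c+1, hc⟩ k)
    (orbitFun q T) := isSignEquivariant_orbitFun q T _ _ _
  have hφ : exchFun q T c hc k ((topCells μ ⟨c+1, hc⟩ k).map p.toEmbedding) =
    (Perm.sign p : ℤ) • orbitFun q T p := setFun_map hd hf hp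
  rw [garnirElt, map_sub, map_sum, smul_sub, hφ, smul_smul, ← Units.val_mul,
    Int.units_mul_self, Units.val_one, one_smul, union_sdiff_map hd hp, Finset.powersetCard_map,
    Finset.sum_map, cellsOf, Finset.powersetCard_map, Finset.sum_map, Finset.smul_sum,
    Finset.smul_sum, ← Finset.sum_attach (Finset.powersetCard k Finset.univ)]
  congr 1
  refine Finset.sum_congr rfl fun A _ => ?_
  have h := apply_mul_eq_setFun hd hf hp (fun x hx => exchPerm_apply_of_notMem_union
    (hk := hk) (hA := (Finset.mem_powersetCard.mp A.2).2) hx)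
  rw [map_exchPerm_topCells, sign_exchPerm] at h
  rw [smul_smul]
  exact h.trans (by simp; rfl)

lemma map_garnirElt_one (q : MLam K μ r →ₗ[K] V) (T : Tab μ r) {k : ℕ} (hk1 : 1 ≤ k)
    (hk : k ≤ μ ⟨c+1, hc⟩) {p : Perm (Cell μ)}
    (hp : ∀ x ∉ cellsOf μ ⟨c, by omega⟩ Finset.univ ∪ topCells μ ⟨c+1, hc⟩ k, p x = x) :
    q (garnirElt K μ r (p.trans T) c hc 1 (hk1.trans hk)) = (Perm.sign p : ℤ) •
      upperSum (cellsOf μ ⟨c, by omega⟩ Finset.univ ∪ topCells μ ⟨c+1, hc⟩ k) k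
        (exchFun q T c hc k) (((topCells μ ⟨c+1, hc⟩ k).erase
          ⟨⟨c+1, hc⟩, ⟨0, by omega⟩⟩).map p.toEmbedding) := by
  have hd : Disjoint (cellsOf μ ⟨c, by omega⟩ Finset.univ) (topCells μ ⟨c+1, hc⟩ k) :=
    disjoint_cellsOf (castSucc_ne hc) _ _
  have hf : IsSignEquivariant (cellsOf μ ⟨c, by omega⟩ Finset.univ) (topCells μ ⟨c+1, hc⟩ k)
    (orbitFun q T) := isSignEquivariant_orbitFun q T _ _ _
  have hφ : exchFun q T c hc k ((topCells μ ⟨c+1, hc⟩ k).map p.toEmbedding) =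
    (Perm.sign p : ℤ) • orbitFun q T p := setFun_map hd hf hp
  obtain ⟨k, rfl⟩ := Nat.exists_eq_add_of_le' hk1
  set X := cellsOf μ ⟨c, by omega⟩ Finset.univ with hX
  set C := topCells μ ⟨c+1, hc⟩ (k + 1) with hC
  set t : Cell μ := ⟨⟨c+1, hc⟩, ⟨0, by omega⟩⟩ with ht
  have htC : t ∈ C := mem_cellsOf.mpr ⟨_, by simp, rfl⟩
  have htX : t ∉ X := Finset.disjoint_right.mp hd htC
  have hD : (C.erase t).map p.toEmbedding ⊆ X ∪ C := by
    intro x hx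
    rw [Finset.mem_map_equiv] at hx
    have := (perm_apply_mem hp (x := p.symm x)).mpr (Finset.mem_union_right X (Finset.mem_of_mem_erase hx))
    rwa [apply_symm_apply] at this
  have hDcard : ((C.erase t).map p.toEmbedding).card = k := by
    rw [Finset.card_map, Finset.card_erase_of_mem htC, card_topCells hk, Nat.add_sub_cancel]
  have hcompl : (X ∪ C) \ (C.erase t).map p.toEmbedding = insert (p t) (X.map p.toEmbedding) := by
    conv_lhs => rw [← map_perm_eq hp, ← Finset.map_sdiff]
    have : (X ∪ C) \ C.erase t = insert t X := by
      ext x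
      have hx : x ∈ X → x ∉ C := fun h => Finset.disjoint_left.mp hd h
      simp only [Finset.mem_sdiff, Finset.mem_union, Finset.mem_erase, Finset.mem_insert]
      by_cases hxt : x = t
      · simp [hxt, htC]
      · simp only [hxt, false_or, ne_eq, not_false_eq_true, true_and]
        tauto
    rw [this, Finset.map_insert]
    rfl
  rw [upperSum_eq_sum_insert _ (Finset.mem_powersetCard.mpr ⟨hD, hDcard⟩), hcompl,
    Finset.sum_insert (by simpa using htX), Finset.sum_map, hX, cellsOf, Finset.sum_map, smul_add,
    garnirElt, map_sub, map_sum, sub_eq_add_neg]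
  congr 1
  · have h1 : insert (p t) ((C.erase t).map p.toEmbedding) = C.map p.toEmbedding := by
      have := Finset.map_insert p.toEmbedding t (C.erase t)
      rw [Finset.insert_erase htC] at this
      exact this.symm
    rw [h1, hφ, smul_smul, ← Units.val_mul, Int.units_mul_self, Units.val_one,
      one_smul]
    rfl
  · have htop : topCells μ ⟨c+1, hc⟩ 1 = {t} := by
      refine (Finset.eq_of_subset_of_card_le ?_ ?_).symm
      · exact Finset.singleton_subset_iff.mpr (mem_cellsOf.mpr ⟨_, by simp, rfl⟩)
      · rw [card_topCells (by omega), Finset.card_singleton]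
    have hterm : ∀ (A : Finset (Fin (μ ⟨c, by omega⟩))) (hA : A.card = 1),
        q (tabloid K μ r ((exchPerm μ c hc 1 (hk1.trans hk) A hA).trans (p.trans T))) =
          (-Perm.sign p : ℤ) • exchFun q T c hc (k + 1)
            ((cellsOf μ ⟨c, by omega⟩ A ∪ C.erase t).map p.toEmbedding) := by
      intro A hA
      have hmap : C.map (exchPerm μ c hc 1 (hk1.trans hk) A hA).toEmbedding =
          cellsOf μ ⟨c, by omega⟩ A ∪ C.erase t := by
        conv_lhs => rw [← Finset.insert_erase htC, Finset.insert_eq, Finset.map_union, ← htop,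
          map_exchPerm_topCells]
        congr 1
        refine Finset.eq_of_subset_of_card_le ?_ (Finset.card_map _).ge
        intro x hx
        rw [Finset.mem_map] at hx
        obtain ⟨y, hy, rfl⟩ := hx
        have hy' := Finset.mem_erase.mp hy
        have : exchPerm μ c hc 1 (hk1.trans hk) A hA y = y := by
          refine exchPerm_apply_of_notMem (fun h => ?_) (by rw [htop]; simpa using hy'.1)
          exact castSucc_ne hc ((fst_of_mem_cellsOf h).symm.trans (fst_of_mem_cellsOf hy'.2))
        rwa [coe_toEmbedding, this]
      have h := apply_mul_eq_setFun hd hf hp (e := exchPerm μ c hc 1 (hk1.trans hk) A hA)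
        (fun x hx => by
          rw [Finset.mem_union, not_or] at hx
          refine exchPerm_apply_of_notMem
            (fun h => hx.1 (mem_cellsOf_univ.mpr (fst_of_mem_cellsOf h))) ?_
          rw [htop, Finset.mem_singleton]
          rintro rfl
          exact hx.2 htC)
      rw [hmap, sign_exchPerm] at h
      exact h.trans (by simp; rfl)
    rw [Finset.sum_congr rfl fun A _ => hterm A.1 (Finset.mem_powersetCard.mp A.2).2]
    rw [Finset.sum_attach (Finset.powersetCard 1 Finset.univ) fun A : Finset (Fin (μ ⟨c, _⟩)) =>
        (-Perm.sign p : ℤ) • exchFun q T c hc (k + 1)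
            ((cellsOf μ ⟨c, _⟩ A ∪ C.erase t).map p.toEmbedding),
      Finset.powersetCard_one, Finset.sum_map, ← Finset.smul_sum, neg_smul, neg_neg]
    congr 1
    refine Finset.sum_congr rfl fun j _ => ?_
    rw [Finset.map_union]
    rfl

/-- The relations exchanging `k` cells imply the relations exchanging one cell. -/
lemma map_garnirElt_one_eq_zero [CharZero K] (q : MLam K μ r →ₗ[K] V) {k : ℕ} (hk1 : 1 ≤ k)
    (hk : k ≤ μ ⟨c+1, hc⟩)
    (hlt : k < μ ⟨c, by omega⟩ ∨ (k = 1 ∧ μ ⟨c, by omega⟩ = 1))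
    (h : ∀ T, q (garnirElt K μ r T c hc k hk) = 0) (T : Tab μ r) :
    q (garnirElt K μ r T c hc 1 (hk1.trans hk)) = 0 := by
  have : IsAddTorsionFree V := .of_isTorsionFree K V
  have hd : Disjoint (cellsOf μ ⟨c, by omega⟩ Finset.univ) (topCells μ ⟨c+1, hc⟩ k) :=
    disjoint_cellsOf (castSucc_ne hc) _ _
  have hU : (cellsOf μ ⟨c, by omega⟩ Finset.univ ∪ topCells μ ⟨c+1, hc⟩ k).card =
      μ ⟨c, by omega⟩ + k := by
    rw [Finset.card_union_of_disjoint hd, card_topCells hk, cellsOf, Finset.card_map,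
      Finset.card_univ, Fintype.card_fin]
  have h1 := map_garnirElt_one q T hk1 hk (p := 1) fun _ _ => rfl
  have h2 : (1 : Perm (Cell μ)).trans T = T := rfl
  rw [h2] at h1
  rw [h1, upperSum_eq_zero_of_eq_sum_sdiff hU hlt, smul_zero]
  · intro B hB
    rw [Finset.mem_powersetCard] at hB
    obtain ⟨p, hp, rfl⟩ := exists_perm_map_eq _ (topCells μ ⟨c+1, hc⟩ k) B
      Finset.subset_union_right hB.1 (by rw [card_topCells hk, hB.2])
    have h3 := map_garnirElt q T hk hp
    rw [h, eq_comm, smul_eq_zero] at h3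
    exact sub_eq_zero.mp (h3.resolve_left (Units.ne_zero _))
  · intro x hx
    rw [Finset.mem_map] at hx
    obtain ⟨y, hy, rfl⟩ := hx
    exact Finset.mem_union_right _ (Finset.mem_of_mem_erase hy)
  · have htC : (⟨⟨c+1, hc⟩, ⟨0, by omega⟩⟩ : Cell μ) ∈ topCells μ ⟨c+1, hc⟩ k :=
      mem_cellsOf.mpr ⟨_, by simp; omega, rfl⟩
    rw [Finset.card_map, Finset.card_erase_of_mem htC, card_topCells hk]
    omega

/-- The relations exchanging one cell imply all Garnir relations. -/
lemma map_garnirElt_eq_zero [CharZero K] (q : MLam K μ r →ₗ[K] V) (h1 : 1 ≤ μ ⟨c+1, hc⟩)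
    (h : ∀ T, q (garnirElt K μ r T c hc 1 h1) = 0) {k : ℕ} (hk : k ≤ μ ⟨c+1, hc⟩) (T : Tab μ r) :
    q (garnirElt K μ r T c hc k hk) = 0 := by
  have : IsAddTorsionFree V := .of_isTorsionFree K V
  have hd : Disjoint (cellsOf μ ⟨c, by omega⟩ Finset.univ) (topCells μ ⟨c+1, hc⟩ k) :=
    disjoint_cellsOf (castSucc_ne hc) _ _
  have h2 := map_garnirElt q T hk (p := 1) fun _ _ => rfl
  have h3 : (1 : Perm (Cell μ)).trans T = T := rfl
  have h4 : (topCells μ ⟨c+1, hc⟩ k).map (1 : Perm (Cell μ)).toEmbedding =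
    topCells μ ⟨c+1, hc⟩ k := Finset.map_refl
  rw [h3, h4] at h2
  rw [h2, sub_eq_zero.mpr, smul_zero]
  refine eq_sum_sdiff_of_upperSum_eq_zero ?_
    (Finset.mem_powersetCard.mpr ⟨Finset.subset_union_right, card_topCells hk⟩)
  intro D hD hDk
  have hk1 : 1 ≤ k := by omega
  set t : Cell μ := ⟨⟨c+1, hc⟩, ⟨0, by omega⟩⟩ with ht
  have htC : t ∈ topCells μ ⟨c+1, hc⟩ k := mem_cellsOf.mpr ⟨_, by simp; omega, rfl⟩
  obtain ⟨p, hp, hpD⟩ := exists_perm_map_eq _ ((topCells μ ⟨c+1, hc⟩ k).erase t) D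
    ((Finset.erase_subset _ _).trans Finset.subset_union_right) hD
    (by rw [Finset.card_erase_of_mem htC, card_topCells hk]; omega)
  have h5 := map_garnirElt_one q T hk1 hk hp
  rw [h, hpD, eq_comm, smul_eq_zero] at h5
  exact h5.resolve_left (Units.ne_zero _)

end Garnir

lemma map_action_mem_garnirSub {K : Type} [Field K] {L r : ℕ} {μ : Fin L → ℕ}
    {ρ : Equiv.Perm (Fin r) → (MLam K μ r →ₗ[K] MLam K μ r)} (hρ : IsTabAction K μ r ρ)
    (g : Equiv.Perm (Fin r)) {x : MLam K μ r} (hx : x ∈ garnirSub K μ r) :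
    ρ g x ∈ garnirSub K μ r := by
  refine Submodule.span_induction (p := fun x _ => ρ g x ∈ garnirSub K μ r) ?_ ?_ ?_ ?_ hx
  · rintro x ⟨T, c, hc, k, hk, rfl⟩
    refine Submodule.subset_span ⟨T.trans g, c, hc, k, hk, ?_⟩
    rw [garnirElt, garnirElt, map_sub, map_sum, hρ]
    congr 1
    refine Finset.sum_congr rfl fun A _ => ?_
    rw [hρ]
    rfl
  · simp
  · intro x y _ _ hx hy
    rw [map_add]
    exact add_mem hx hy
  · intro a x _ hx
    rw [map_smul]
    exact Submodule.smul_mem _ a hx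

/-- Theorem 6.4(2) of the paper: let `λ` be a partition of `r` with conjugate
`μ = (μ_1,…,μ_ℓ)` and let `k_1, …, k_{ℓ−1}` be positive integers with `k_c ≤ μ_{c+1}`.
If `μ_c > μ_{c+1}` for every `c` such that `k_c = μ_{c+1} > 1`, then
`M^λ / GR^λ(k_1,…,k_{ℓ−1}) ≅ S^λ` as `𝔖_r`-modules; equivalently
`GR^λ(k_1,…,k_{ℓ−1}) = G^λ` as subspaces of `M^λ`. -/
theorem statement16 (K : Type) [Field K] [CharZero K] (L r : ℕ) (μ : Fin L → ℕ)
    (hpos : ∀ i, 0 < μ i) (hanti : ∀ i j : Fin L, i ≤ j → μ j ≤ μ i)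
    (hr : r = ∑ i, μ i)
    (kk : ℕ → ℕ)
    (hk : ∀ (c : ℕ) (hc : c + 1 < L), 1 ≤ kk c ∧ kk c ≤ μ ⟨c+1, hc⟩)
    (ρ : Equiv.Perm (Fin r) → (MLam K μ r →ₗ[K] MLam K μ r))
    (hρ : IsTabAction K μ r ρ)
    (hcond : ∀ (c : ℕ) (hc : c + 1 < L),
      kk c = μ ⟨c+1, hc⟩ → 1 < kk c → μ ⟨c+1, hc⟩ < μ ⟨c, by omega⟩) :
    IsQuotIso K (grSub K μ r kk) (garnirSub K μ r) ρ ρ ∧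
      grSub K μ r kk = garnirSub K μ r := by
  have heq : grSub K μ r kk = garnirSub K μ r := by
    apply le_antisymm
    · refine Submodule.span_le.mpr ?_
      rintro x ⟨T, c, hc, hkc, rfl⟩
      exact Submodule.subset_span ⟨T, c, hc, kk c, hkc, rfl⟩
    · refine Submodule.span_le.mpr ?_
      rintro x ⟨T, c, hc, k, hkc, rfl⟩
      obtain ⟨hk1, hk2⟩ := hk c hc
      have hle : μ ⟨c+1, hc⟩ ≤ μ ⟨c, by omega⟩ := hanti _ _ (by simp)
      have hlt : kk c < μ ⟨c, by omega⟩ ∨ (kk c = 1 ∧ μ ⟨c, by omega⟩ = 1) := by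
        have := hcond c hc
        omega
      rw [SetLike.mem_coe, ← Submodule.Quotient.mk_eq_zero, ← Submodule.mkQ_apply]
      refine map_garnirElt_eq_zero _ (hk1.trans hk2) (fun T' => ?_) hkc T
      refine map_garnirElt_one_eq_zero _ hk1 hk2 hlt (fun T'' => ?_) T'
      rw [Submodule.mkQ_apply, Submodule.Quotient.mk_eq_zero]
      exact Submodule.subset_span ⟨T'', c, hc, hk2, rfl⟩
  refine ⟨⟨Submodule.quotEquivOfEq _ _ heq, fun g x y hxy => ?_⟩, heq⟩
  rw [Submodule.quotEquivOfEq_mk, Submodule.Quotient.eq] at hxy ⊢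
  rw [← map_sub]
  exact map_action_mem_garnirSub hρ g hxy

end Specht
end
end

section
/- For every partition λ of r, M^λ / SGR^λ(1,…,1) ≅ S^λ as 𝔖_r-modules; equivalently, SGR^λ(1,…,1) = G^λ as subspaces of M^λ. (Here SGR^λ(1,…,1) is the span of the relations h^T_c = λ'_{c+1}·T̄ − Σ S̄, the sum over all tableaux S obtained from T by exchanging one entry of column c+1 with one entry of column c, for all tableaux T and all c = 1,…,λ_1−1.) -/
set_option synthInstance.maxHeartbeats 1000000
set_option maxSynthPendingDepth 3
set_option maxHeartbeats 1000000

noncomputable section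

namespace Specht

open Equiv Equiv.Perm

section Antisymmetrization

variable {α : Type*} [Fintype α] [DecidableEq α]

/-- The permutations of `α` that fix every element outside `S`. -/
def fixPerms (S : Finset α) : Finset (Perm α) :=
  Finset.univ.filter fun σ => ∀ x ∉ S, σ x = x

lemma mem_fixPerms {S : Finset α} {σ : Perm α} : σ ∈ fixPerms S ↔ ∀ x ∉ S, σ x = x := by
  simp [fixPerms]

lemma mul_mem_fixPerms {S : Finset α} {σ τ : Perm α} (hσ : σ ∈ fixPerms S)
    (hτ : τ ∈ fixPerms S) : σ * τ ∈ fixPerms S := by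
  rw [mem_fixPerms] at *
  intro x hx
  rw [Perm.mul_apply, hτ x hx, hσ x hx]

lemma swap_mem_fixPerms {S : Finset α} {x y : α} (hx : x ∈ S) (hy : y ∈ S) :
    swap x y ∈ fixPerms S := by
  rw [mem_fixPerms]
  intro z hz
  exact swap_apply_of_ne_of_ne (fun h => hz (h ▸ hx)) (fun h => hz (h ▸ hy))

lemma apply_mem_of_mem_fixPerms {S : Finset α} {σ : Perm α} (hσ : σ ∈ fixPerms S) (x : α) :
    σ x ∈ S ↔ x ∈ S := by
  rw [mem_fixPerms] at hσ
  refine ⟨fun h => ?_, fun h => ?_⟩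
  · by_contra hx
    exact hx (hσ x hx ▸ h)
  · by_contra hx
    have := σ.injective (hσ _ hx)
    exact hx (this.symm ▸ h)

variable {V : Type*} [AddCommGroup V]

lemma sum_fixPerms_insert {S : Finset α} {j : α} (hj : j ∉ S) (ψ : Perm α → V) :
    ∑ τ ∈ fixPerms (insert j S), (sign τ : ℤ) • ψ τ =
      ∑ σ ∈ fixPerms S, (sign σ : ℤ) • (ψ σ - ∑ m ∈ S, ψ (σ * swap m j)) := by
  have key : ∑ τ ∈ fixPerms (insert j S), (sign τ : ℤ) • ψ τ =
      ∑ p ∈ fixPerms S ×ˢ insert j S,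
        (sign (p.1 * swap p.2 j) : ℤ) • ψ (p.1 * swap p.2 j) := by
    symm
    refine Finset.sum_bij' (fun p _ => p.1 * swap p.2 j)
      (fun τ _ => (τ * swap (τ⁻¹ j) j, τ⁻¹ j)) ?_ ?_ ?_ ?_ ?_
    · rintro ⟨σ, m⟩ h
      rw [Finset.mem_product] at h
      refine mul_mem_fixPerms ?_ (swap_mem_fixPerms h.2 (Finset.mem_insert_self _ _))
      have := h.1
      rw [mem_fixPerms] at this ⊢
      exact fun x hx => this x fun hS => hx (Finset.mem_insert_of_mem hS)
    · intro τ hτ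
      have hm : τ⁻¹ j ∈ insert j S := by
        rw [← apply_mem_of_mem_fixPerms hτ]
        simp
      refine Finset.mem_product.2 ⟨?_, hm⟩
      have := mul_mem_fixPerms hτ (swap_mem_fixPerms hm (Finset.mem_insert_self j S))
      rw [mem_fixPerms] at this ⊢
      intro x hx
      by_cases hxj : x = j
      · subst hxj
        simp
      · exact this x (by simp [hx, hxj])
    · rintro ⟨σ, m⟩ h
      have h1 := mem_fixPerms.1 (Finset.mem_product.1 h).1 j hj
      have h2 : σ.symm j = j := by rw [Equiv.symm_apply_eq, h1]
      ext1 <;> simp [mul_inv_rev, h2, mul_assoc]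
    · intro τ _
      simp [mul_assoc]
    · intros
      rfl
  rw [key, Finset.sum_product]
  refine Finset.sum_congr rfl fun σ _ => ?_
  rw [Finset.sum_insert hj, swap_self, smul_sub, Finset.smul_sum, sub_eq_add_neg,
    ← Finset.sum_neg_distrib]
  congr 1
  refine Finset.sum_congr rfl fun m hm => ?_
  have hmj : m ≠ j := fun h => hj (h ▸ hm)
  rw [Perm.sign_mul, sign_swap hmj]
  simp

/-- `φ` changes sign under right multiplication by transpositions of elements of `C`. -/
def IsAlternatingOn (φ : Perm α → V) (C : Finset α) : Prop :=
  ∀ (σ : Perm α), ∀ x ∈ C, ∀ y ∈ C, x ≠ y → φ (σ * swap x y) = -φ σ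

lemma IsAlternatingOn.map_mul {φ : Perm α → V} {C : Finset α} (hφ : IsAlternatingOn φ C)
    (ρ : Perm α) {σ : Perm α} (hσ : σ ∈ fixPerms C) :
    φ (ρ * σ) = (sign σ : ℤ) • φ ρ := by
  have main : ∀ (τ : Perm {x // x ∈ C}) (ρ : Perm α),
      φ (ρ * ofSubtype τ) = (sign τ : ℤ) • φ ρ := by
    intro τ
    induction τ using swap_induction_on with
    | one => simp
    | swap_mul f x y hxy ih =>
      intro ρ
      have hs : ofSubtype (swap x y) = swap (x : α) y := ofSubtype_swap_eq x y
      rw [_root_.map_mul, ← mul_assoc, ih, hs, hφ ρ x x.2 y y.2 (fun h => hxy (Subtype.ext h)),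
        Perm.sign_mul, sign_swap hxy]
      simp
  have h := main (σ.subtypePerm fun x => apply_mem_of_mem_fixPerms hσ x) ρ
  rw [← sign_ofSubtype, ofSubtype_subtypePerm] at h
  · exact h
  · intro x hx
    by_contra hxC
    exact hx (mem_fixPerms.1 hσ x hxC)

/-- The signed sum of `φ` over the left coset `ρ * 𝔖_S`. -/
def altSum (φ : Perm α → V) (S : Finset α) (ρ : Perm α) : V :=
  ∑ σ ∈ fixPerms S, (sign σ : ℤ) • φ (ρ * σ)

lemma sum_mul_swap_of_mem (φ : Perm α → V) {S : Finset α} (ρ : Perm α) {x y : α}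
    (hx : x ∈ S) (hy : y ∈ S) (hxy : x ≠ y) :
    ∑ σ ∈ fixPerms S, (sign σ : ℤ) • φ (ρ * (σ * swap x y)) = -altSum φ S ρ := by
  rw [altSum, ← Finset.sum_neg_distrib]
  refine Finset.sum_bij' (fun σ _ => σ * swap x y) (fun σ _ => σ * swap x y)
    (fun σ h => mul_mem_fixPerms h (swap_mem_fixPerms hx hy))
    (fun σ h => mul_mem_fixPerms h (swap_mem_fixPerms hx hy)) ?_ ?_ ?_
  · intro σ _
    simp [mul_assoc]
  · intro σ _
    simp [mul_assoc]
  · intro σ _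
    rw [Perm.sign_mul, sign_swap hxy]
    simp

lemma altSum_insert {φ : Perm α → V} {C D Y : Finset α} (hCD : Disjoint C D)
    (hD : IsAlternatingOn φ D) (hY : Y ⊆ D) {j : α} (hj : j ∈ D) (hjY : j ∉ Y) (ρ : Perm α) :
    altSum φ (C ∪ insert j Y) ρ = ((Y.card : ℤ) + 1) • altSum φ (C ∪ Y) ρ -
      ∑ i ∈ C, ∑ σ ∈ fixPerms (C ∪ Y), (sign σ : ℤ) • φ (ρ * (σ * swap i j)) := by
  have hjC : j ∉ C := fun h => Finset.disjoint_left.1 hCD h hj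
  have hCY : Disjoint C Y := hCD.mono_right hY
  rw [Finset.union_insert, altSum,
    sum_fixPerms_insert (by simp [hjC, hjY]) (fun σ => φ (ρ * σ)), Finset.sum_comm, altSum,
    Finset.smul_sum, ← Finset.sum_sub_distrib]
  refine Finset.sum_congr rfl fun σ _ => ?_
  have hYsum : ∑ m ∈ Y, φ (ρ * (σ * swap m j)) = -((Y.card : ℤ) • φ (ρ * σ)) := by
    rw [Finset.sum_congr rfl fun m hm => ?_, Finset.sum_const, natCast_zsmul, ← smul_neg]
    rw [← mul_assoc, hD _ m (hY hm) j hj (fun h => hjY (h ▸ hm))]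
  rw [Finset.sum_union hCY, hYsum, ← Finset.smul_sum]
  module

variable {K : Type*} [Field K] [CharZero K] [Module K V]

/-- If `N` contains the symmetrized relations between `C` and `D`, it contains the alternating
sums over `C` together with any nonempty part of `D`. -/
theorem altSum_mem {φ : Perm α → V} {C D : Finset α} (hCD : Disjoint C D)
    (hD : IsAlternatingOn φ D) (hcard : D.card ≤ C.card) (N : Submodule K V)
    (hN : ∀ σ, (D.card : K) • φ σ - ∑ j ∈ D, ∑ i ∈ C, φ (σ * swap i j) ∈ N)
    (ρ : Perm α) (Y : Finset α) (hY : Y ⊆ D) (hY0 : Y.Nonempty) :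
    altSum φ (C ∪ Y) ρ ∈ N := by
  induction hn : (D \ Y).card using Nat.strong_induction_on generalizing Y with
  | _ n ih =>
  have hH : ∑ σ ∈ fixPerms (C ∪ Y), (sign σ : ℤ) •
      ((D.card : K) • φ (ρ * σ) - ∑ j ∈ D, ∑ i ∈ C, φ (ρ * σ * swap i j)) ∈ N :=
    N.sum_mem fun σ _ => zsmul_mem (hN _) _
  have hI : ∑ j ∈ D \ Y, altSum φ (C ∪ insert j Y) ρ ∈ N := by
    refine N.sum_mem fun j hj => ?_
    rw [Finset.mem_sdiff] at hj
    refine ih _ ?_ _ (Finset.insert_subset hj.1 hY) (Finset.insert_nonempty _ _) rfl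
    rw [← hn]
    refine Finset.card_lt_card (Finset.ssubset_iff_subset_ne.2
      ⟨Finset.sdiff_subset_sdiff le_rfl (Finset.subset_insert _ _), fun h => ?_⟩)
    have : j ∈ D \ insert j Y := h ▸ Finset.mem_sdiff.2 hj
    simp at this
  have hcalc : ∑ σ ∈ fixPerms (C ∪ Y), (sign σ : ℤ) •
      ((D.card : K) • φ (ρ * σ) - ∑ j ∈ D, ∑ i ∈ C, φ (ρ * σ * swap i j)) =
      (Y.card * (C.card - D.card + Y.card + 1) : K) • altSum φ (C ∪ Y) ρ +
        ∑ j ∈ D \ Y, altSum φ (C ∪ insert j Y) ρ := by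
    have h1 : ∑ j ∈ D \ Y, altSum φ (C ∪ insert j Y) ρ =
        ((D.card - Y.card : K) * (Y.card + 1)) • altSum φ (C ∪ Y) ρ -
          ∑ j ∈ D \ Y, ∑ i ∈ C, ∑ σ ∈ fixPerms (C ∪ Y),
            (sign σ : ℤ) • φ (ρ * (σ * swap i j)) := by
      rw [Finset.sum_congr rfl fun j hj => altSum_insert hCD hD hY (Finset.mem_sdiff.1 hj).1
        (Finset.mem_sdiff.1 hj).2 ρ, Finset.sum_sub_distrib, Finset.sum_const,
        Finset.card_sdiff_of_subset hY, ← Nat.cast_smul_eq_nsmul K,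
        Nat.cast_sub (Finset.card_le_card hY), ← Int.cast_smul_eq_zsmul K, smul_smul]
      push_cast
      rfl
    have h2 : ∑ j ∈ Y, ∑ i ∈ C, ∑ σ ∈ fixPerms (C ∪ Y),
        (sign σ : ℤ) • φ (ρ * (σ * swap i j)) =
        -((Y.card * C.card : K) • altSum φ (C ∪ Y) ρ) := by
      have : ∀ j ∈ Y, ∀ i ∈ C, ∑ σ ∈ fixPerms (C ∪ Y),
          (sign σ : ℤ) • φ (ρ * (σ * swap i j)) = -altSum φ (C ∪ Y) ρ := fun j hj i hi =>
        sum_mul_swap_of_mem φ ρ (Finset.mem_union_left _ hi) (Finset.mem_union_right _ hj)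
          (fun h => Finset.disjoint_left.1 hCD hi (h ▸ hY hj))
      rw [Finset.sum_congr rfl fun j hj => Finset.sum_congr rfl (this j hj)]
      simp only [Finset.sum_const, ← Nat.cast_smul_eq_nsmul K, smul_smul, smul_neg]
    have h3 : ∑ σ ∈ fixPerms (C ∪ Y), (sign σ : ℤ) •
        ((D.card : K) • φ (ρ * σ) - ∑ j ∈ D, ∑ i ∈ C, φ (ρ * σ * swap i j)) =
        (D.card : K) • altSum φ (C ∪ Y) ρ - ∑ j ∈ D, ∑ i ∈ C, ∑ σ ∈ fixPerms (C ∪ Y),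
            (sign σ : ℤ) • φ (ρ * (σ * swap i j)) := by
      simp only [smul_sub, Finset.sum_sub_distrib, altSum, Finset.smul_sum, mul_assoc]
      congr 1
      · exact Finset.sum_congr rfl fun σ _ => smul_comm _ _ _
      · rw [Finset.sum_comm]
        exact Finset.sum_congr rfl fun j _ => Finset.sum_comm
    rw [h3, h1, ← Finset.sum_sdiff hY, h2]
    module
  rw [hcalc] at hH
  have hF := (N.add_mem_iff_left hI).1 hH
  refine (N.smul_mem_iff ?_).1 hF
  have hpos : (Y.card * (C.card - D.card + Y.card + 1) : K) =
      ((Y.card * (C.card - D.card + Y.card + 1) : ℕ) : K) := by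
    push_cast [Nat.cast_sub hcard]
    ring
  rw [hpos, Nat.cast_ne_zero]
  exact mul_ne_zero hY0.card_pos.ne' (by omega)

/-- If `N` contains the symmetrized relations between `C` and `D`, it contains the relation
exchanging a single `j ∈ D` with the elements of `C`. -/
theorem sub_sum_swap_mem {φ : Perm α → V} {C D : Finset α} (hCD : Disjoint C D)
    (hC : IsAlternatingOn φ C) (hD : IsAlternatingOn φ D) (hcard : D.card ≤ C.card)
    (N : Submodule K V)
    (hN : ∀ σ, (D.card : K) • φ σ - ∑ j ∈ D, ∑ i ∈ C, φ (σ * swap i j) ∈ N)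
    (ρ : Perm α) {j : α} (hj : j ∈ D) :
    φ ρ - ∑ i ∈ C, φ (ρ * swap i j) ∈ N := by
  have hjC : j ∉ C := fun h => Finset.disjoint_left.1 hCD h hj
  have h := altSum_mem hCD hD hcard N hN ρ {j} (by simpa using hj) (by simp)
  rw [Finset.union_comm, ← Finset.insert_eq, altSum,
    sum_fixPerms_insert hjC (fun σ => φ (ρ * σ))] at h
  have hterm : ∀ σ ∈ fixPerms C, (sign σ : ℤ) • (φ (ρ * σ) - ∑ m ∈ C, φ (ρ * (σ * swap m j))) =
      φ ρ - ∑ i ∈ C, φ (ρ * swap i j) := by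
    intro σ hσ
    have hσj := mem_fixPerms.1 hσ j hjC
    have hswap : ∀ m, φ (ρ * (σ * swap m j)) = (sign σ : ℤ) • φ (ρ * swap (σ m) j) := by
      intro m
      rw [← hC.map_mul _ hσ, mul_assoc, Equiv.mul_swap_eq_swap_mul, hσj]
    have hsq : ((sign σ : ℤ)) * (sign σ : ℤ) = 1 := by
      rw [← Units.val_mul, Int.units_mul_self, Units.val_one]
    simp_rw [hswap]
    rw [hC.map_mul _ hσ, ← Finset.smul_sum, ← smul_sub, smul_smul, hsq, one_smul]
    congr 1
    exact Finset.sum_equiv σ (fun i => (apply_mem_of_mem_fixPerms hσ i).symm) fun _ _ => rfl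
  rw [Finset.sum_congr rfl hterm, Finset.sum_const, ← Nat.cast_smul_eq_nsmul K] at h
  refine (N.smul_mem_iff ?_).1 h
  rw [Nat.cast_ne_zero]
  refine (Finset.card_pos.2 ⟨1, ?_⟩).ne'
  simp [mem_fixPerms]

end Antisymmetrization

section Exchange

variable {α : Type*} [DecidableEq α]

/-- The product of the transpositions exchanging `x i` and `y i`. -/
def matchSwap {k : ℕ} (x y : Fin k → α) : Perm α :=
  (List.ofFn fun i => swap (x i) (y i)).prod

lemma matchSwap_succ {k : ℕ} (x y : Fin (k + 1) → α) :
    matchSwap x y = swap (x 0) (y 0) * matchSwap (Fin.tail x) (Fin.tail y) := by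
  rw [matchSwap, List.ofFn_succ, List.prod_cons]
  rfl

lemma matchSwap_apply_of_forall_ne {k : ℕ} {x y : Fin k → α} {z : α} (hx : ∀ i, z ≠ x i)
    (hy : ∀ i, z ≠ y i) : matchSwap x y z = z := by
  induction k with
  | zero => simp [matchSwap]
  | succ k ih =>
    rw [matchSwap_succ, Perm.mul_apply,
      ih (x := Fin.tail x) (y := Fin.tail y) (fun i => hx i.succ) (fun i => hy i.succ),
      swap_apply_of_ne_of_ne (hx 0) (hy 0)]

lemma matchSwap_apply_right {k : ℕ} {x y : Fin k → α} (hx : Function.Injective x)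
    (hy : Function.Injective y) (hxy : ∀ i j, x i ≠ y j) (i : Fin k) :
    matchSwap x y (y i) = x i := by
  induction k with
  | zero => exact i.elim0
  | succ k ih =>
    rw [matchSwap_succ, Perm.mul_apply]
    refine Fin.cases ?_ (fun i => ?_) i
    · rw [matchSwap_apply_of_forall_ne (x := Fin.tail x) (y := Fin.tail y)
        (fun j => (hxy j.succ 0).symm) (fun j h => (Fin.succ_ne_zero j) (hy h.symm)),
        swap_apply_right]
    · have := ih (x := Fin.tail x) (y := Fin.tail y)
        (fun a b h => Fin.succ_injective _ (hx h)) (fun a b h => Fin.succ_injective _ (hy h))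
        (fun a b => hxy _ _) i
      rw [Fin.tail] at this
      rw [this]
      exact swap_apply_of_ne_of_ne (fun h => Fin.succ_ne_zero i (hx h)) (hxy _ _)

lemma swap_mul_matchSwap {k : ℕ} {x y : Fin k → α} (hx : Function.Injective x)
    (hy : Function.Injective y) (hxy : ∀ i j, x i ≠ y j) (p : Fin k) {z : α}
    (hzx : ∀ i, z ≠ x i) (hzy : ∀ i, z ≠ y i) :
    swap (x p) z * matchSwap x y = matchSwap x y * swap (y p) z := by
  rw [Equiv.mul_swap_eq_swap_mul, matchSwap_apply_right hx hy hxy,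
    matchSwap_apply_of_forall_ne hzx hzy]

lemma matchSwap_comp_swap {k : ℕ} {x y : Fin k → α} (hx : Function.Injective x)
    (hy : Function.Injective y) (hxy : ∀ i j, x i ≠ y j) (p q : Fin k) :
    matchSwap (x ∘ swap p q) y = matchSwap x y * swap (y p) (y q) * swap (x p) (x q) := by
  have hconj : matchSwap (x ∘ swap p q) y =
      MulAut.conj (swap (x p) (x q)) (matchSwap x y) := by
    rw [matchSwap, matchSwap, map_list_prod, List.map_ofFn]
    congr 2
    funext i
    have h1 : swap (x p) (x q) (x i) = x (swap p q i) := by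
      rw [← hx.swap_apply]
    have h2 : swap (x p) (x q) (y i) = y i :=
      swap_apply_of_ne_of_ne (hxy p i).symm (hxy q i).symm
    simp only [Function.comp_apply, MulAut.conj_apply]
    rw [Equiv.mul_swap_eq_swap_mul, h1, h2, mul_inv_cancel_right]
  rw [hconj, MulAut.conj_apply, swap_inv, Equiv.mul_swap_eq_swap_mul (matchSwap x y),
    matchSwap_apply_right hx hy hxy, matchSwap_apply_right hx hy hxy]

variable {V : Type*} [AddCommGroup V]

lemma map_mul_matchSwap_comp_swap {φ : Perm α → V} {C D : Finset α} (hCD : Disjoint C D)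
    (hC : IsAlternatingOn φ C) (hD : IsAlternatingOn φ D) {k : ℕ} {x y : Fin k → α}
    (hx : Function.Injective x) (hy : Function.Injective y) (hxC : ∀ i, x i ∈ C)
    (hyD : ∀ i, y i ∈ D) (ρ : Perm α) (p q : Fin k) :
    φ (ρ * matchSwap (x ∘ swap p q) y) = φ (ρ * matchSwap x y) := by
  by_cases hpq : p = q
  · subst hpq
    simp
  have hxy : ∀ i j, x i ≠ y j := fun i j h => Finset.disjoint_left.1 hCD (hxC i) (h ▸ hyD j)
  rw [matchSwap_comp_swap hx hy hxy, ← mul_assoc, hC _ _ (hxC p) _ (hxC q) (hx.ne hpq),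
    ← mul_assoc, hD _ _ (hyD p) _ (hyD q) (hy.ne hpq), neg_neg]

lemma sum_injective_succ {γ : Type*} [Fintype γ] [DecidableEq γ] {k : ℕ}
    (f : (Fin (k + 1) → γ) → V) :
    ∑ ι : Fin (k + 1) → γ with Function.Injective ι, f ι =
      ∑ ι : Fin k → γ with Function.Injective ι,
        (∑ i, f (Fin.cons i ι) - ∑ m, f (Fin.cons (ι m) ι)) := by
  rw [Finset.sum_filter, ← (Fin.consEquiv fun _ => γ).sum_comp, Fintype.sum_prod_type_right,
    Finset.sum_filter]
  refine Finset.sum_congr rfl fun ι _ => ?_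
  by_cases hι : Function.Injective ι
  · rw [if_pos hι, ← Finset.sum_image (s := Finset.univ) (g := ι)
      (f := fun i => f (Fin.cons i ι)) hι.injOn, eq_sub_iff_add_eq,
      ← Finset.sum_filter_add_sum_filter_not Finset.univ (fun i => i ∉ Set.range ι)
        (fun i => f (Fin.cons i ι)), Finset.sum_filter]
    congr 1
    · refine Finset.sum_congr rfl fun i _ => ?_
      simp [Fin.consEquiv, Fin.cons_injective_iff, hι]
    · refine Finset.sum_congr ?_ fun _ _ => rfl
      ext i
      simp
  · rw [if_neg hι]
    refine Finset.sum_eq_zero fun i _ => if_neg fun h => hι ?_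
    exact (Fin.cons_injective_iff.1 h).2

variable {K : Type*} [Field K] [Module K V]

/-- If `N` contains the single-exchange relations, it contains the relations exchanging the
cells `y` with all choices of `k` cells of `C`, summed over ordered choices. -/
theorem sum_injective_sub_mem {φ : Perm α → V} {C D : Finset α} (hCD : Disjoint C D)
    (hD : IsAlternatingOn φ D) {γ : Type*} [Fintype γ] [DecidableEq γ] {x : γ → α}
    (hx : Function.Injective x) (hxC : ∀ i, x i ∈ C) (N : Submodule K V)
    (hN : ∀ ρ, ∀ j ∈ D, φ ρ - ∑ i, φ (ρ * swap (x i) j) ∈ N) {k : ℕ} (y : Fin k → α)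
    (hy : Function.Injective y) (hyD : ∀ i, y i ∈ D) (ρ : Perm α) :
    ∑ ι : Fin k → γ with Function.Injective ι, φ (ρ * matchSwap (x ∘ ι) y) -
      (k.factorial : K) • φ ρ ∈ N := by
  induction k generalizing ρ with
  | zero =>
    rw [Finset.filter_true_of_mem fun ι _ => Function.injective_of_subsingleton ι]
    simp [matchSwap]
  | succ k ih =>
    set y' := Fin.tail y
    have hyinj : Function.Injective y' := fun a b h => Fin.succ_injective _ (hy h)
    have hyD' : ∀ i, y' i ∈ D := fun i => hyD _
    have ih := ih y' hyinj hyD'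
    have hcons : ∀ (ι : Fin k → γ) i, φ (ρ * matchSwap (x ∘ (Fin.cons i ι : Fin (k + 1) → γ)) y) =
        φ (ρ * swap (x i) (y 0) * matchSwap (x ∘ ι) y') := by
      intro ι i
      rw [matchSwap_succ, mul_assoc]
      rfl
    have hmem : ∀ ι : Fin k → γ, Function.Injective ι → ∀ m,
        φ (ρ * swap (x (ι m)) (y 0) * matchSwap (x ∘ ι) y') =
          -φ (ρ * matchSwap (x ∘ ι) y') := by
      intro ι hι m
      have hne : ∀ m, y 0 ≠ y' m := fun m h => Fin.succ_ne_zero m (hy h.symm)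
      have hxy : ∀ i, ∀ j ∈ D, x i ≠ j := fun i j hj h =>
        Finset.disjoint_left.1 hCD (hxC i) (h ▸ hj)
      have := swap_mul_matchSwap (x := x ∘ ι) (y := y') (hx.comp hι) hyinj
        (fun i j => hxy _ _ (hyD' j)) m (z := y 0) (fun i => (hxy _ _ (hyD 0)).symm) hne
      rw [Function.comp_apply] at this
      rw [mul_assoc, this, ← mul_assoc, hD _ _ (hyD' m) _ (hyD 0) (hne m).symm]
    have hsum : ∑ ι : Fin (k + 1) → γ with Function.Injective ι, φ (ρ * matchSwap (x ∘ ι) y) =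
        ∑ i, ∑ ι : Fin k → γ with Function.Injective ι,
          φ (ρ * swap (x i) (y 0) * matchSwap (x ∘ ι) y') +
        (k : K) • ∑ ι : Fin k → γ with Function.Injective ι, φ (ρ * matchSwap (x ∘ ι) y') := by
      rw [sum_injective_succ, Finset.sum_comm, Finset.smul_sum, ← Finset.sum_add_distrib]
      refine Finset.sum_congr rfl fun ι hι => ?_
      simp only [hcons]
      rw [Finset.sum_congr rfl fun m _ => hmem ι (Finset.mem_filter.1 hι).2 m, Finset.sum_const,
        Finset.card_univ, Fintype.card_fin, smul_neg, sub_neg_eq_add, Nat.cast_smul_eq_nsmul]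
    have h1 := N.sum_mem fun i (_ : i ∈ Finset.univ) => ih (ρ * swap (x i) (y 0))
    have h2 := N.smul_mem (k : K) (ih ρ)
    have h3 := N.smul_mem (k.factorial : K) (hN ρ (y 0) (hyD 0))
    have h4 := N.sub_mem (N.add_mem h1 h2) h3
    rw [hsum, Nat.factorial_succ]
    convert h4 using 1
    rw [Finset.sum_sub_distrib, ← Finset.smul_sum]
    push_cast
    module

lemma sum_injective_eq {γ : Type*} [Fintype γ] [LinearOrder γ] {k : ℕ} (f : (Fin k → γ) → V)
    (hf : ∀ ι, Function.Injective ι → ∀ p q, f (ι ∘ swap p q) = f ι) :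
    ∑ ι : Fin k → γ with Function.Injective ι, f ι =
      k.factorial • ∑ A ∈ (Finset.powersetCard k (Finset.univ : Finset γ)).attach,
        f fun i => (A.1.orderIsoOfFin (Finset.mem_powersetCard.1 A.2).2 i : γ) := by
  have hperm : ∀ (π : Perm (Fin k)) ι, Function.Injective ι → f (ι ∘ π) = f ι := by
    intro π
    induction π using swap_induction_on with
    | one => simp
    | swap_mul g p q _ ih =>
      intro ι hι
      rw [Perm.coe_mul, ← Function.comp_assoc, ih _ (hι.comp (swap p q).injective), hf ι hι]
  have hinj : ∀ A : {A // A ∈ Finset.powersetCard k (Finset.univ : Finset γ)},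
      Function.Injective fun i =>
        (A.1.orderIsoOfFin (Finset.mem_powersetCard.1 A.2).2 i : γ) := fun A =>
    Subtype.val_injective.comp (OrderIso.injective _)
  rw [Finset.smul_sum]
  trans ∑ A ∈ (Finset.powersetCard k (Finset.univ : Finset γ)).attach,
    ∑ π : Perm (Fin k),
      f ((fun i => (A.1.orderIsoOfFin (Finset.mem_powersetCard.1 A.2).2 i : γ)) ∘ π)
  · rw [← Finset.sum_product']
    symm
    refine Finset.sum_bij (fun p _ => (fun i =>
      (p.1.1.orderIsoOfFin (Finset.mem_powersetCard.1 p.1.2).2 i : γ)) ∘ p.2) ?_ ?_ ?_ ?_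
    · rintro ⟨A, π⟩ _
      exact Finset.mem_filter.2 ⟨Finset.mem_univ _, (hinj A).comp π.injective⟩
    · rintro ⟨A, π⟩ _ ⟨B, π'⟩ _ h
      have hrange : ∀ (A : {A // A ∈ Finset.powersetCard k (Finset.univ : Finset γ)})
          (π : Perm (Fin k)), Set.range ((fun i =>
            (A.1.orderIsoOfFin (Finset.mem_powersetCard.1 A.2).2 i : γ)) ∘ π) = A.1 := by
        intro A π
        rw [π.surjective.range_comp]
        exact Finset.range_orderEmbOfFin A.1 (Finset.mem_powersetCard.1 A.2).2
      have hAB : A = B := by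
        apply Subtype.ext
        rw [← Finset.coe_inj, ← hrange A π, ← hrange B π']
        exact congrArg Set.range h
      subst hAB
      have : π = π' := Equiv.ext fun i => hinj A (congrFun h i)
      rw [this]
    · intro ι hι
      have hι := (Finset.mem_filter.1 hι).2
      have hcard : (Finset.univ.image ι).card = k := by
        rw [Finset.card_image_of_injective _ hι, Finset.card_univ, Fintype.card_fin]
      let e := (Finset.univ.image ι).orderIsoOfFin hcard
      let g : Fin k → Fin k := fun i =>
        e.symm ⟨ι i, Finset.mem_image_of_mem _ (Finset.mem_univ i)⟩
      have hg : Function.Injective g := fun a b h =>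
        hι (congrArg Subtype.val (e.symm.injective h))
      refine ⟨(⟨Finset.univ.image ι, Finset.mem_powersetCard.2 ⟨Finset.subset_univ _, hcard⟩⟩,
        Equiv.ofBijective g (Finite.injective_iff_bijective.1 hg)), by simp, ?_⟩
      funext i
      change ((e (g i) : _) : γ) = ι i
      simp [g]
    · intros
      rfl
  · refine Finset.sum_congr rfl fun A _ => ?_
    rw [Finset.sum_congr rfl fun π _ => hperm π _ (hinj A), Finset.sum_const, Finset.card_univ,
      Fintype.card_perm, Fintype.card_fin]

end Exchange

section Tabloid

variable (K : Type) [Field K] {L : ℕ} (μ : Fin L → ℕ) (r : ℕ)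

/-- The cells of column `c`. -/
def columnCells (c : Fin L) : Finset (Cell μ) :=
  Finset.univ.map (Function.Embedding.sigmaMk c)

lemma mem_columnCells {c : Fin L} (j : Fin (μ c)) : (⟨c, j⟩ : Cell μ) ∈ columnCells μ c :=
  Finset.mem_map_of_mem (Function.Embedding.sigmaMk c) (Finset.mem_univ j)

lemma card_columnCells (c : Fin L) : (columnCells μ c).card = μ c := by
  simp [columnCells]

lemma disjoint_columnCells {c d : Fin L} (h : c ≠ d) :
    Disjoint (columnCells μ c) (columnCells μ d) := by
  rw [Finset.disjoint_left]
  intro x hx hy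
  obtain ⟨i, -, rfl⟩ := Finset.mem_map.1 hx
  obtain ⟨j, -, hj⟩ := Finset.mem_map.1 hy
  exact h (congrArg Sigma.fst hj).symm

lemma isAlternatingOn_tabloid (T : Tab μ r) (c : Fin L) :
    IsAlternatingOn (fun σ : Perm (Cell μ) => tabloid K μ r (σ.trans T)) (columnCells μ c) := by
  intro σ x hx y hy hxy
  obtain ⟨i, -, rfl⟩ := Finset.mem_map.1 hx
  obtain ⟨j, -, rfl⟩ := Finset.mem_map.1 hy
  rw [eq_neg_iff_add_eq_zero, add_comm]
  exact (Submodule.Quotient.mk_eq_zero _).2 (Submodule.subset_span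
    ⟨σ.trans T, c, i, j, fun h => hxy (h ▸ rfl), rfl⟩)

lemma sum_powersetCard_one_attach {γ V : Type*} [Fintype γ] [AddCommMonoid V]
    (f : ∀ A : Finset γ, A.card = 1 → V) :
    ∑ A ∈ (Finset.powersetCard 1 (Finset.univ : Finset γ)).attach,
      f A.1 (Finset.mem_powersetCard.1 A.2).2 = ∑ i, f {i} (Finset.card_singleton i) := by
  symm
  refine Finset.sum_bij (fun i _ => ⟨{i}, Finset.mem_powersetCard.2
    ⟨Finset.subset_univ _, Finset.card_singleton i⟩⟩) ?_ ?_ ?_ ?_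
  · simp
  · intro i _ j _ h
    exact Finset.singleton_injective (congrArg Subtype.val h)
  · rintro ⟨A, hA⟩ _
    obtain ⟨i, rfl⟩ := Finset.card_eq_one.1 (Finset.mem_powersetCard.1 hA).2
    exact ⟨i, Finset.mem_univ _, rfl⟩
  · intros
    rfl

lemma sgrElt_one (T : Tab μ r) (c : ℕ) (hc : c + 1 < L) :
    sgrElt K μ r T c hc 1 = (μ ⟨c + 1, hc⟩ : K) • tabloid K μ r T -
      ∑ j : Fin (μ ⟨c + 1, hc⟩), ∑ i : Fin (μ ⟨c, by omega⟩),
        tabloid K μ r ((swap (⟨_, i⟩ : Cell μ) ⟨_, j⟩).trans T) := by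
  rw [sgrElt, Nat.choose_one_right, Finset.sum_comm (s := Finset.univ)]
  congr 1
  rw [sum_powersetCard_one_attach fun A hA =>
    ∑ B ∈ (Finset.powersetCard 1 (Finset.univ : Finset (Fin (μ ⟨c+1, hc⟩)))).attach,
        tabloid K μ r
          ((exch2Perm μ c hc 1 A hA B.1 (Finset.mem_powersetCard.mp B.2).2).trans T)]
  refine Finset.sum_congr rfl fun i _ => ?_
  rw [sum_powersetCard_one_attach fun B hB =>
    tabloid K μ r ((exch2Perm μ c hc 1 {i} (Finset.card_singleton i) B hB).trans T)]
  refine Finset.sum_congr rfl fun j _ => ?_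
  simp [exch2Perm]

lemma garnirElt_one (T : Tab μ r) (c : ℕ) (hc : c + 1 < L) (hk : 1 ≤ μ ⟨c + 1, hc⟩) :
    garnirElt K μ r T c hc 1 hk = tabloid K μ r T -
      ∑ i : Fin (μ ⟨c, by omega⟩),
        tabloid K μ r ((swap (⟨_, i⟩ : Cell μ) ⟨⟨c + 1, hc⟩, ⟨0, hk⟩⟩).trans T) := by
  rw [garnirElt, sum_powersetCard_one_attach fun A hA =>
    tabloid K μ r ((exchPerm μ c hc 1 hk A hA).trans T)]
  congr 1
  refine Finset.sum_congr rfl fun i _ => ?_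
  simp [exchPerm]

lemma tabloid_sub_sum_swap_mem_garnirSub (T : Tab μ r) (c : ℕ) (hc : c + 1 < L)
    (j : Fin (μ ⟨c + 1, hc⟩)) :
    tabloid K μ r T - ∑ i : Fin (μ ⟨c, by omega⟩),
      tabloid K μ r ((swap (⟨_, i⟩ : Cell μ) ⟨_, j⟩).trans T) ∈ garnirSub K μ r := by
  have hk : 1 ≤ μ ⟨c + 1, hc⟩ := j.pos
  have hgen : ∀ T, garnirElt K μ r T c hc 1 hk ∈ garnirSub K μ r := fun T =>
    Submodule.subset_span ⟨T, c, hc, 1, hk, rfl⟩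
  have halt := isAlternatingOn_tabloid K μ r T ⟨c + 1, hc⟩
  by_cases hj : j = ⟨0, hk⟩
  · rw [hj, ← garnirElt_one]
    exact hgen T
  let y : Fin (μ ⟨c + 1, hc⟩) → Cell μ := fun j => ⟨_, j⟩
  let s : Perm (Cell μ) := swap (y ⟨0, hk⟩) (y j)
  have hne : y ⟨0, hk⟩ ≠ y j := fun h => hj (sigma_mk_injective h).symm
  have hs : ∀ σ : Perm (Cell μ),
      tabloid K μ r ((σ * s).trans T) = -tabloid K μ r (σ.trans T) := fun σ =>
    halt σ _ (mem_columnCells μ _) _ (mem_columnCells μ _) hne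
  have h := (garnirSub K μ r).neg_mem (hgen (s.trans T))
  have h1 : tabloid K μ r (s.trans T) = -tabloid K μ r T := hs 1
  have h2 : ∀ i : Fin (μ ⟨c, by omega⟩),
      tabloid K μ r ((swap (⟨_, i⟩ : Cell μ) (y ⟨0, hk⟩)).trans (s.trans T)) =
        -tabloid K μ r ((swap (⟨_, i⟩ : Cell μ) (y j)).trans T) := by
    intro i
    rw [← hs]
    have hi : s ⟨_, i⟩ = ⟨_, i⟩ := by
      refine swap_apply_of_ne_of_ne ?_ ?_ <;>
      · intro h
        have := congrArg Sigma.fst h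
        simp [y] at this
    have : s * swap (⟨_, i⟩ : Cell μ) (y ⟨0, hk⟩) = swap (⟨_, i⟩ : Cell μ) (y j) * s := by
      rw [Equiv.mul_swap_eq_swap_mul, hi]
      simp [s]
    exact congrArg (fun σ : Perm (Cell μ) => tabloid K μ r (σ.trans T)) this
  rw [garnirElt_one, h1, Finset.sum_congr rfl fun i _ => h2 i, Finset.sum_neg_distrib,
    neg_sub_neg, neg_sub] at h
  exact h

theorem sgrSub_one_le_garnirSub : sgrSub K μ r (fun _ => 1) ≤ garnirSub K μ r := by
  refine Submodule.span_le.2 ?_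
  rintro _ ⟨T, c, hc, rfl⟩
  have h := (garnirSub K μ r).sum_mem fun j (_ : j ∈ Finset.univ) =>
    tabloid_sub_sum_swap_mem_garnirSub K μ r T c hc j
  rw [Finset.sum_sub_distrib, Finset.sum_const, Finset.card_univ, Fintype.card_fin,
    ← Nat.cast_smul_eq_nsmul K] at h
  rw [SetLike.mem_coe, sgrElt_one]
  exact h

theorem garnirSub_le_sgrSub_one [CharZero K] (hμ : Antitone μ) :
    garnirSub K μ r ≤ sgrSub K μ r (fun _ => 1) := by
  refine Submodule.span_le.2 ?_
  rintro _ ⟨T, c, hc, k, hk, rfl⟩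
  let φ : Perm (Cell μ) → MLam K μ r := fun σ => tabloid K μ r (σ.trans T)
  let x : Fin (μ ⟨c, by omega⟩) → Cell μ := fun i => ⟨_, i⟩
  let y : Fin k → Cell μ := fun i => ⟨⟨c + 1, hc⟩, ⟨i, by omega⟩⟩
  let C := columnCells μ ⟨c, by omega⟩
  let D := columnCells μ ⟨c + 1, hc⟩
  have hCD : Disjoint C D := disjoint_columnCells μ (by simp)
  have hx : Function.Injective x := sigma_mk_injective (β := fun c => Fin (μ c))
  have hy : Function.Injective y := fun i j h =>
    Fin.castLE_injective hk (sigma_mk_injective (β := fun c => Fin (μ c)) h)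
  have hxC : ∀ i, x i ∈ C := fun i => mem_columnCells μ i
  have hyD : ∀ i, y i ∈ D := fun i => mem_columnCells μ _
  have hC : IsAlternatingOn φ C := isAlternatingOn_tabloid K μ r T _
  have hD : IsAlternatingOn φ D := isAlternatingOn_tabloid K μ r T _
  have hcard : D.card ≤ C.card := by
    rw [card_columnCells, card_columnCells]
    exact hμ (Fin.mk_le_mk.2 (Nat.le_succ c))
  have hN : ∀ σ, (D.card : K) • φ σ - ∑ j ∈ D, ∑ i ∈ C, φ (σ * swap i j) ∈
      sgrSub K μ r (fun _ => 1) := by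
    intro σ
    refine Submodule.subset_span ⟨σ.trans T, c, hc, ?_⟩
    rw [sgrElt_one, card_columnCells]
    simp only [C, D, columnCells, Finset.sum_map]
    rfl
  have hswap : ∀ ρ, ∀ j ∈ D, φ ρ - ∑ i, φ (ρ * swap (x i) j) ∈
      sgrSub K μ r (fun _ => 1) := by
    intro ρ j hj
    have := sub_sum_swap_mem hCD hC hD hcard _ hN ρ hj
    simp only [C, columnCells, Finset.sum_map] at this
    exact this
  have h := sum_injective_sub_mem hCD hD hx hxC _ hswap y hy hyD 1
  rw [sum_injective_eq, ← Nat.cast_smul_eq_nsmul K, ← smul_sub] at h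
  · have h := (Submodule.smul_mem_iff _ (Nat.cast_ne_zero.2 k.factorial_ne_zero)).1 h
    have h := Submodule.neg_mem _ h
    rw [neg_sub] at h
    exact h
  · intro ι hι p q
    exact map_mul_matchSwap_comp_swap hCD hC hD (hx.comp hι) hy (fun i => hxC _) hyD 1 p q

lemma garnirSub_le_comap {ρ : Perm (Fin r) → (MLam K μ r →ₗ[K] MLam K μ r)}
    (hρ : IsTabAction K μ r ρ) (σ : Perm (Fin r)) :
    garnirSub K μ r ≤ (garnirSub K μ r).comap (ρ σ) := by
  refine Submodule.span_le.2 ?_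
  rintro _ ⟨T, c, hc, k, hk, rfl⟩
  refine Submodule.subset_span ⟨T.trans σ, c, hc, k, hk, ?_⟩
  simp only [garnirElt, map_sub, map_sum, hρ σ _]
  rfl

end Tabloid

end Specht

namespace Specht

/-- Theorem 1.2 of the paper (Brauner–Friedmann): for every partition `λ` of `r`,
`M^λ / SGR^λ(1,…,1) ≅ S^λ` as `𝔖_r`-modules; equivalently `SGR^λ(1,…,1) = G^λ` as
subspaces of `M^λ`. Here `SGR^λ(1,…,1)` is spanned by the relations
`h^T_c = λ'_{c+1}·T̄ − Σ S̄` (single exchanges between columns `c` and `c+1`). -/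
theorem statement17 (K : Type) [Field K] [CharZero K] (L r : ℕ) (μ : Fin L → ℕ)
    (hpos : ∀ i, 0 < μ i) (hanti : ∀ i j : Fin L, i ≤ j → μ j ≤ μ i)
    (hr : r = ∑ i, μ i)
    (ρ : Equiv.Perm (Fin r) → (MLam K μ r →ₗ[K] MLam K μ r))
    (hρ : IsTabAction K μ r ρ) :
    IsQuotIso K (sgrSub K μ r (fun _ => 1)) (garnirSub K μ r) ρ ρ ∧
      sgrSub K μ r (fun _ => 1) = garnirSub K μ r := by
  have hEq : sgrSub K μ r (fun _ => 1) = garnirSub K μ r :=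
    le_antisymm (sgrSub_one_le_garnirSub K μ r) (garnirSub_le_sgrSub_one K μ r hanti)
  refine ⟨⟨Submodule.quotEquivOfEq _ _ hEq, fun σ x y hxy => ?_⟩, hEq⟩
  rw [Submodule.quotEquivOfEq_mk, Submodule.Quotient.eq] at hxy ⊢
  rw [← map_sub]
  exact garnirSub_le_comap K μ r hρ σ hxy

end Specht
end
end
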